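/- arXiv:1206.1472 — 5 statements merged into one kernel-verified Lean document; each statement's English description precedes it below -/
import Mathlib

section
/- Assume (H1) and fix l ∈ ℝ^d; let L_l be a solution of L_l - L^*(L_l) = Σ_{i=1}^{2d} (e_i·l) A_i^* A_i - (m·l) I, and define f(ρ, x) = Re Tr(ρ L_l) + x·l. Let (ρ_n, X_n)_{n≥0} be the quantum trajectory process of the open quantum random walk, set ΔX_n = X_n - X_{n-1}, and define M_n = Σ_{k=2}^n ( f(ρ_k, ΔX_k) − (Pf)(ρ_{k-1}, ΔX_{k-1}) ) for n ≥ 2, where (Pf)(ρ, x) = Σ_{j=1}^{2d} Tr(A_j ρ A_j^*) f( A_j ρ A_j^*/Tr(A_j ρ A_j^*), e_j ) = Re Tr(ρ L_l) + m·l. Then (M_n)_{n≥2} is a centered martingale with respect to the filtration (F_n)_{n≥2}, where F_n = σ((ρ_k, X_k); k ≤ n). -/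
open MeasureTheory Filter Matrix Finset
open scoped ComplexOrder

noncomputable section

/-- The direction vectors `e_1, …, e_{2d}` in `ℤ^d`, with `e_{d+j} = -e_j`. -/
def dir (d : ℕ) (i : Fin (2 * d)) : Fin d → ℤ :=
  fun j => if (i : ℕ) < d then (if (j : ℕ) = (i : ℕ) then 1 else 0)
           else (if (j : ℕ) = (i : ℕ) - d then -1 else 0)

/-- The direction vectors viewed in `ℝ^d`. -/
def dirR (d : ℕ) (i : Fin (2 * d)) : Fin d → ℝ := fun j => (dir d i j : ℝ)

instance {k : ℕ} : MeasurableSpace (Matrix (Fin k) (Fin k) ℂ) := MeasurableSpace.pi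

/-- A density matrix: positive semidefinite with trace one. -/
def IsDensity {k : ℕ} (ρ : Matrix (Fin k) (Fin k) ℂ) : Prop := ρ.PosSemidef ∧ ρ.trace = 1

/-- The quantum trajectory process of the open quantum random walk. -/
structure IsQTraj {k d : ℕ} {Ω : Type} {mΩ : MeasurableSpace Ω}
    (A : Fin (2 * d) → Matrix (Fin k) (Fin k) ℂ)
    (μ : Measure Ω) (ℱ : Filtration ℕ mΩ)
    (ρ : ℕ → Ω → Matrix (Fin k) (Fin k) ℂ)
    (X : ℕ → Ω → Fin d → ℤ) : Prop where
  density : ∀ n, ∀ᵐ ω ∂μ, IsDensity (ρ n ω)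
  adapted_ρ : ∀ n, Measurable[ℱ n] (ρ n)
  adapted_X : ∀ n, Measurable[ℱ n] (X n)
  prob : ∀ (n : ℕ) (j : Fin (2 * d)),
    μ[(fun ω => if X (n + 1) ω = X n ω + dir d j then (1 : ℝ) else 0) | ℱ n]
      =ᵐ[μ] fun ω => ((A j * ρ n ω * (A j)ᴴ).trace).re
  update : ∀ (n : ℕ) (j : Fin (2 * d)), ∀ᵐ ω ∂μ,
    X (n + 1) ω = X n ω + dir d j →
      ρ (n + 1) ω = ((A j * ρ n ω * (A j)ᴴ).trace)⁻¹ • (A j * ρ n ω * (A j)ᴴ)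

/-- The drift vector `m = Σ_{i=1}^{2d} Tr(A_i ρ_∞ A_i^*) e_i ∈ ℝ^d`. -/
def mvec {k d : ℕ} (A : Fin (2 * d) → Matrix (Fin k) (Fin k) ℂ)
    (ρinf : Matrix (Fin k) (Fin k) ℂ) : Fin d → ℝ :=
  fun j => ∑ i, ((A i * ρinf * (A i)ᴴ).trace).re * dirR d i j

/-- The function `f(ρ, x) = Re Tr(ρ L_l) + x·l` solving the Poisson equation. -/
def fPoisson {k d : ℕ} (Ll : Matrix (Fin k) (Fin k) ℂ) (l : Fin d → ℝ)
    (ρ : Matrix (Fin k) (Fin k) ℂ) (x : Fin d → ℝ) : ℝ :=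
  ((ρ * Ll).trace).re + ∑ j, x j * l j

/-- The transition operator of the chain `(ρ_n, ΔX_n)` applied to `f`
(`(Pf)(ρ,x)` does not depend on `x`; terms with `Tr(A_j ρ A_j^*) = 0` are omitted,
since then `0⁻¹ • ... = 0` and the factor in front vanishes). -/
def Pf {k d : ℕ} (A : Fin (2 * d) → Matrix (Fin k) (Fin k) ℂ)
    (Ll : Matrix (Fin k) (Fin k) ℂ) (l : Fin d → ℝ)
    (ρ : Matrix (Fin k) (Fin k) ℂ) : ℝ :=
  ∑ i, ((A i * ρ * (A i)ᴴ).trace).re *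
    fPoisson Ll l (((A i * ρ * (A i)ᴴ).trace)⁻¹ • (A i * ρ * (A i)ᴴ)) (dirR d i)

section fact
open scoped MatrixOrder Matrix.Norms.L2Operator
theorem psd_fact {k : ℕ} (σ : Matrix (Fin k) (Fin k) ℂ) (h : σ.PosSemidef) :
    ∃ C : Matrix (Fin k) (Fin k) ℂ, σ = Cᴴ * C := by
  obtain ⟨C, hC⟩ := CStarAlgebra.nonneg_iff_eq_star_mul_self.mp
    (Matrix.nonneg_iff_posSemidef.mpr h)
  exact ⟨C, hC⟩
end fact

theorem entry_bound {k : ℕ} (σ : Matrix (Fin k) (Fin k) ℂ) (h : σ.PosSemidef)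
    (ht : σ.trace.re ≤ 1) (i j : Fin k) : ‖σ i j‖ ≤ 1 := by
  obtain ⟨C, rfl⟩ := psd_fact σ h
  have hd : ∀ i, (∑ a, ‖C a i‖ ^ 2) ≤ 1 := by
    intro i
    refine le_trans ?_ ht
    have h1 : ((Cᴴ * C).trace).re = ∑ i, ∑ a, ‖C a i‖ ^ 2 := by
      simp only [Matrix.trace, Matrix.diag, Matrix.mul_apply, Matrix.conjTranspose_apply,
        Complex.re_sum]
      refine Finset.sum_congr rfl fun i _ => Finset.sum_congr rfl fun a _ => ?_
      rw [Complex.sq_norm, Complex.normSq_apply]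
      simp
    rw [h1]
    exact Finset.single_le_sum (f := fun i => ∑ a, ‖C a i‖ ^ 2)
      (fun i _ => Finset.sum_nonneg fun a _ => by positivity) (Finset.mem_univ i)
  rw [Matrix.mul_apply]
  have h2 : ‖∑ a, Cᴴ i a * C a j‖ ≤ ∑ a, (‖C a i‖ ^ 2 + ‖C a j‖ ^ 2) / 2 := by
    refine (norm_sum_le _ _).trans (Finset.sum_le_sum fun a _ => ?_)
    rw [norm_mul, Matrix.conjTranspose_apply, norm_star]
    nlinarith [sq_nonneg (‖C a i‖ - ‖C a j‖)]
  refine h2.trans ?_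
  rw [← Finset.sum_div, Finset.sum_add_distrib]
  linarith [hd i, hd j]

theorem upd_bound {k : ℕ} (B : Matrix (Fin k) (Fin k) ℂ) (h : B.PosSemidef) (i j : Fin k) :
    ‖((B.trace)⁻¹ • B) i j‖ ≤ 1 := by
  have h0 : 0 ≤ B.trace := h.trace_nonneg
  apply entry_bound
  · exact h.smul (by
      exact inv_nonneg.mpr h0)
  · rw [Matrix.trace_smul, smul_eq_mul]
    by_cases hz : B.trace = 0
    · simp [hz]
    · simp [inv_mul_cancel₀ hz]

theorem fP_bound {k d : ℕ} (Ll : Matrix (Fin k) (Fin k) ℂ) (l : Fin d → ℝ)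
    (σ : Matrix (Fin k) (Fin k) ℂ) (h : ∀ i j, ‖σ i j‖ ≤ 1) (x : Fin d → ℝ) :
    ‖fPoisson Ll l σ x‖ ≤ (∑ i, ∑ j, ‖Ll j i‖) + ‖∑ j, x j * l j‖ := by
  unfold fPoisson
  refine (norm_add_le _ _).trans (add_le_add ?_ le_rfl)
  refine (Complex.abs_re_le_norm _).trans ?_
  simp only [Matrix.trace, Matrix.diag, Matrix.mul_apply]
  refine (norm_sum_le _ _).trans (Finset.sum_le_sum fun a _ => ?_)
  refine (norm_sum_le _ _).trans (Finset.sum_le_sum fun b _ => ?_)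
  rw [norm_mul]
  exact mul_le_of_le_one_left (norm_nonneg _) (h a b)

theorem dir_inj (d : ℕ) : Function.Injective (dir d) := by
  intro a b hab
  have ha := a.2
  have hb := b.2
  ext
  by_cases h1 : (a : ℕ) < d
  · have h := congrFun hab ⟨a, h1⟩
    simp only [dir, h1, if_true] at h
    split_ifs at h <;> omega
  · have h := congrFun hab ⟨a - d, by omega⟩
    simp only [dir, h1, if_true, if_false] at h
    split_ifs at h <;> omega

theorem trace_meas {k : ℕ} {Ω : Type} {m : MeasurableSpace Ω}
    {ρ : Ω → Matrix (Fin k) (Fin k) ℂ} (h : Measurable ρ) (A B : Matrix (Fin k) (Fin k) ℂ) :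
    Measurable fun ω => (A * ρ ω * B).trace := by
  have he : ∀ i j, Measurable fun ω => ρ ω i j := fun i j =>
    measurable_pi_iff.mp (measurable_pi_iff.mp h i) j
  simp only [Matrix.trace, Matrix.diag, Matrix.mul_apply]
  fun_prop

theorem fP_meas {k d : ℕ} {Ω : Type} {m : MeasurableSpace Ω}
    (Ll : Matrix (Fin k) (Fin k) ℂ) (l : Fin d → ℝ)
    {ρ : Ω → Matrix (Fin k) (Fin k) ℂ} (h : Measurable ρ)
    {x : Ω → Fin d → ℝ} (hx : Measurable x) :
    Measurable fun ω => fPoisson Ll l (ρ ω) (x ω) := by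
  have h1 := trace_meas h 1 Ll
  simp only [one_mul] at h1
  have he : ∀ i, Measurable fun ω => x ω i := fun i => measurable_pi_iff.mp hx i
  unfold fPoisson
  fun_prop

theorem upd_meas {k : ℕ} {Ω : Type} {m : MeasurableSpace Ω}
    {ρ : Ω → Matrix (Fin k) (Fin k) ℂ} (h : Measurable ρ) (A B : Matrix (Fin k) (Fin k) ℂ) :
    Measurable fun ω => ((A * ρ ω * B).trace)⁻¹ • (A * ρ ω * B) := by
  have ht := trace_meas h A B
  have he : ∀ i j, Measurable fun ω => ρ ω i j := fun i j =>
    measurable_pi_iff.mp (measurable_pi_iff.mp h i) j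
  refine measurable_pi_iff.mpr fun i => measurable_pi_iff.mpr fun j => ?_
  simp only [Matrix.smul_apply, smul_eq_mul]
  refine ht.inv.mul ?_
  simp only [Matrix.mul_apply]
  fun_prop

theorem Pf_meas {k d : ℕ} {Ω : Type} {m : MeasurableSpace Ω}
    (A : Fin (2 * d) → Matrix (Fin k) (Fin k) ℂ)
    (Ll : Matrix (Fin k) (Fin k) ℂ) (l : Fin d → ℝ)
    {ρ : Ω → Matrix (Fin k) (Fin k) ℂ} (h : Measurable ρ) :
    Measurable fun ω => Pf A Ll l (ρ ω) := by
  unfold Pf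
  refine Finset.measurable_sum _ fun i _ => ?_
  exact (Complex.measurable_re.comp (trace_meas h _ _)).mul
    (fP_meas Ll l (upd_meas h _ _) measurable_const)

theorem diff_meas {d : ℕ} {Ω : Type} {m : MeasurableSpace Ω} {X Y : Ω → Fin d → ℤ}
    (hx : Measurable X) (hy : Measurable Y) :
    Measurable (fun ω j => ((X ω j - Y ω j : ℤ) : ℝ)) := by
  refine measurable_pi_iff.mpr fun j => ?_
  have h1 : Measurable fun ω => X ω j := measurable_pi_iff.mp hx j
  have h2 : Measurable fun ω => Y ω j := measurable_pi_iff.mp hy j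
  have h3 : Measurable (fun z : ℤ => (z : ℝ)) := measurable_from_top
  exact h3.comp (h1.sub h2)

section main
variable {k d : ℕ} {A : Fin (2 * d) → Matrix (Fin k) (Fin k) ℂ}
    {Ω : Type} {mΩ : MeasurableSpace Ω} {μ : Measure Ω} [IsProbabilityMeasure μ]
    {ℱ : Filtration ℕ mΩ}
    {ρ : ℕ → Ω → Matrix (Fin k) (Fin k) ℂ} {X : ℕ → Ω → Fin d → ℤ}

/-- jump indicator -/
def ind (X : ℕ → Ω → Fin d → ℤ) (n : ℕ) (j : Fin (2 * d)) : Ω → ℝ :=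
  fun ω => if X (n + 1) ω = X n ω + dir d j then (1 : ℝ) else 0

/-- increment value -/
def gval (A : Fin (2 * d) → Matrix (Fin k) (Fin k) ℂ) (Ll : Matrix (Fin k) (Fin k) ℂ)
    (l : Fin d → ℝ) (ρ : ℕ → Ω → Matrix (Fin k) (Fin k) ℂ) (n : ℕ) (j : Fin (2 * d)) : Ω → ℝ :=
  fun ω => fPoisson Ll l (((A j * ρ n ω * (A j)ᴴ).trace)⁻¹ • (A j * ρ n ω * (A j)ᴴ)) (dirR d j)

theorem ind_meas (hQT : IsQTraj A μ ℱ ρ X) (n : ℕ) (j : Fin (2 * d)) :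
    Measurable (ind X n j) := by
  have h1 : Measurable (X (n + 1)) := (hQT.adapted_X (n + 1)).mono (ℱ.le _) le_rfl
  have h2 : Measurable (X n) := (hQT.adapted_X n).mono (ℱ.le _) le_rfl
  have h3 : Measurable fun ω => X n ω + dir d j := h2.add_const _
  exact Measurable.ite (measurableSet_eq_fun h1 h3) measurable_const measurable_const

theorem ind_int (hQT : IsQTraj A μ ℱ ρ X) (n : ℕ) (j : Fin (2 * d)) :
    Integrable (ind X n j) μ := by
  refine Integrable.of_bound (ind_meas hQT n j).aestronglyMeasurable 1 (ae_of_all _ fun ω => ?_)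
  unfold ind
  split_ifs <;> simp

theorem ind_sum_le (X : ℕ → Ω → Fin d → ℤ) (n : ℕ) (ω : Ω) : ∑ j, ind X n j ω ≤ 1 := by
  by_cases h : ∃ j, X (n + 1) ω = X n ω + dir d j
  · obtain ⟨j, hj⟩ := h
    rw [Finset.sum_eq_single j]
    · simp [ind, hj]
    · intro b _ hb
      have : ¬ X (n + 1) ω = X n ω + dir d b := by
        intro hc
        exact hb (dir_inj d (add_left_cancel (hc.symm.trans hj)))
      simp [ind, this]
    · simp
  · push Not at h
    simp [ind, h]

theorem ind_sum (hA : ∑ j, (A j)ᴴ * A j = 1) (hQT : IsQTraj A μ ℱ ρ X) (n : ℕ) :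
    ∀ᵐ ω ∂μ, ∃ j, X (n + 1) ω = X n ω + dir d j := by
  have hint : Integrable (fun ω => ∑ j, ind X n j ω) μ :=
    integrable_finsetSum _ fun j _ => ind_int hQT n j
  have h1 : ∫ ω, ∑ j, ind X n j ω ∂μ = 1 := by
    rw [integral_finsetSum _ fun j _ => ind_int hQT n j]
    have : ∀ j, ∫ ω, ind X n j ω ∂μ = ∫ ω, ((A j * ρ n ω * (A j)ᴴ).trace).re ∂μ := by
      intro j
      rw [← integral_condExp (ℱ.le n)]
      exact integral_congr_ae (hQT.prob n j)
    simp_rw [this]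
    rw [← integral_finsetSum]
    · have : ∀ᵐ ω ∂μ, ∑ j, ((A j * ρ n ω * (A j)ᴴ).trace).re = 1 := by
        filter_upwards [hQT.density n] with ω hω
        have : ∀ j, (A j * ρ n ω * (A j)ᴴ).trace = (((A j)ᴴ * A j) * ρ n ω).trace := by
          intro j
          rw [Matrix.trace_mul_comm, Matrix.mul_assoc]
        simp_rw [this]
        rw [← Complex.re_sum, ← Matrix.trace_sum, ← Finset.sum_mul, hA, one_mul, hω.2]
        simp
      rw [integral_congr_ae this]
      simp
    · intro j _
      exact (integrable_condExp (m := ℱ n)).congr (hQT.prob n j)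
  have h2 : ∫ ω, (1 - ∑ j, ind X n j ω) ∂μ = 0 := by
    rw [integral_sub (integrable_const _) hint, h1]; simp
  rw [integral_eq_zero_iff_of_nonneg (fun ω => sub_nonneg.mpr (ind_sum_le X n ω))
    ((integrable_const _).sub hint)] at h2
  filter_upwards [h2] with ω hω
  by_contra hc
  push Not at hc
  simp [ind, hc] at hω

theorem fP_eq (hA : ∑ j, (A j)ᴴ * A j = 1) (hQT : IsQTraj A μ ℱ ρ X)
    (Ll : Matrix (Fin k) (Fin k) ℂ) (l : Fin d → ℝ) (n : ℕ) :
    (fun ω => fPoisson Ll l (ρ (n + 1) ω) (fun j => ((X (n + 1) ω j - X n ω j : ℤ) : ℝ)))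
      =ᵐ[μ] ∑ j, ind X n j * gval A Ll l ρ n j := by
  filter_upwards [ind_sum hA hQT n, ae_all_iff.mpr (hQT.update n)] with ω ⟨j, hj⟩ hu
  rw [Finset.sum_apply, Finset.sum_eq_single j]
  · have hx : (fun i => ((X (n + 1) ω i - X n ω i : ℤ) : ℝ)) = dirR d j := by
      funext i
      simp [hj, dirR]
    rw [hx, hu j hj]
    simp [ind, gval, hj]
  · intro b _ hb
    have : ¬ X (n + 1) ω = X n ω + dir d b := by
      intro hc
      exact hb (dir_inj d (add_left_cancel (hc.symm.trans hj)))
    simp [ind, this]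
  · simp

theorem gval_meas (hQT : IsQTraj A μ ℱ ρ X)
    (Ll : Matrix (Fin k) (Fin k) ℂ) (l : Fin d → ℝ) (n : ℕ) (j : Fin (2 * d)) :
    Measurable[ℱ n] (gval A Ll l ρ n j) :=
  @fP_meas k d Ω (ℱ n) Ll l _ (@upd_meas k Ω (ℱ n) _ (hQT.adapted_ρ n) _ _) _
    (@measurable_const _ _ _ (ℱ n) _)

theorem prod_int (hQT : IsQTraj A μ ℱ ρ X)
    (Ll : Matrix (Fin k) (Fin k) ℂ) (l : Fin d → ℝ) (n : ℕ) (j : Fin (2 * d)) :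
    Integrable (ind X n j * gval A Ll l ρ n j) μ := by
  refine (ind_int hQT n j).mul_bdd (c := (∑ a, ∑ b, ‖Ll b a‖) + ‖∑ i, dirR d j i * l i‖)
    ((gval_meas hQT Ll l n j).mono (ℱ.le n) le_rfl).aestronglyMeasurable ?_
  filter_upwards [hQT.density n] with ω hω
  exact fP_bound _ _ _ (upd_bound _ (hω.1.mul_mul_conjTranspose_same _)) _

theorem prod_condExp (hQT : IsQTraj A μ ℱ ρ X)
    (Ll : Matrix (Fin k) (Fin k) ℂ) (l : Fin d → ℝ) (n : ℕ) (j : Fin (2 * d)) :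
    μ[ind X n j * gval A Ll l ρ n j | ℱ n] =ᵐ[μ]
      fun ω => ((A j * ρ n ω * (A j)ᴴ).trace).re * gval A Ll l ρ n j ω := by
  refine (condExp_mul_of_stronglyMeasurable_right (gval_meas hQT Ll l n j).stronglyMeasurable
    (prod_int hQT Ll l n j) (ind_int hQT n j)).trans ?_
  filter_upwards [hQT.prob n j] with ω hω
  rw [Pi.mul_apply]
  exact congrArg (· * _) hω

theorem fP_int (hA : ∑ j, (A j)ᴴ * A j = 1) (hQT : IsQTraj A μ ℱ ρ X)
    (Ll : Matrix (Fin k) (Fin k) ℂ) (l : Fin d → ℝ) (n : ℕ) :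
    Integrable (fun ω => fPoisson Ll l (ρ (n + 1) ω)
      (fun j => ((X (n + 1) ω j - X n ω j : ℤ) : ℝ))) μ :=
  (integrable_finsetSum' _ fun j _ => prod_int hQT Ll l n j).congr (fP_eq hA hQT Ll l n).symm

theorem fP_condExp (hA : ∑ j, (A j)ᴴ * A j = 1) (hQT : IsQTraj A μ ℱ ρ X)
    (Ll : Matrix (Fin k) (Fin k) ℂ) (l : Fin d → ℝ) (n : ℕ) :
    μ[fun ω => fPoisson Ll l (ρ (n + 1) ω)
      (fun j => ((X (n + 1) ω j - X n ω j : ℤ) : ℝ)) | ℱ n] =ᵐ[μ]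
      fun ω => Pf A Ll l (ρ n ω) := by
  refine (condExp_congr_ae (fP_eq hA hQT Ll l n)).trans ?_
  refine (condExp_finsetSum (fun j _ => prod_int hQT Ll l n j) _).trans ?_
  filter_upwards [ae_all_iff.mpr (prod_condExp hQT Ll l n)] with ω hω
  rw [Finset.sum_apply]
  simp only [hω]
  rfl

theorem Pf_int (hA : ∑ j, (A j)ᴴ * A j = 1) (hQT : IsQTraj A μ ℱ ρ X)
    (Ll : Matrix (Fin k) (Fin k) ℂ) (l : Fin d → ℝ) (n : ℕ) :
    Integrable (fun ω => Pf A Ll l (ρ n ω)) μ :=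
  (integrable_condExp (m := ℱ n)).congr (fP_condExp hA hQT Ll l n)

end main

/-- The process `M_n = Σ_{k=2}^n ( f(ρ_k, ΔX_k) − (Pf)(ρ_{k-1}, ΔX_{k-1}) )`,
with `f(ρ,x) = Re Tr(ρ L_l) + x·l`, is a centered martingale with respect to `(F_n)`. -/
theorem stmt9 {k d : ℕ} (hd : 1 ≤ d)
    (A : Fin (2 * d) → Matrix (Fin k) (Fin k) ℂ)
    (hA : ∑ j, (A j)ᴴ * A j = 1)
    (ρinf : Matrix (Fin k) (Fin k) ℂ) (hρinf : IsDensity ρinf)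
    (hinv : (∑ j, A j * ρinf * (A j)ᴴ) = ρinf)
    (huniq : ∀ σ, IsDensity σ → (∑ j, A j * σ * (A j)ᴴ) = σ → σ = ρinf)
    (l : Fin d → ℝ) (Ll : Matrix (Fin k) (Fin k) ℂ)
    (hLl : Ll - (∑ i, (A i)ᴴ * Ll * A i) =
      (∑ i, (∑ j, dirR d i j * l j) • ((A i)ᴴ * A i)) -
        (∑ j, mvec A ρinf j * l j) • (1 : Matrix (Fin k) (Fin k) ℂ))
    {Ω : Type} {mΩ : MeasurableSpace Ω} (μ : Measure Ω) [IsProbabilityMeasure μ]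
    (ℱ : Filtration ℕ mΩ)
    (ρ : ℕ → Ω → Matrix (Fin k) (Fin k) ℂ) (X : ℕ → Ω → Fin d → ℤ)
    (hQT : IsQTraj A μ ℱ ρ X)
    (M : ℕ → Ω → ℝ)
    (hM : ∀ n ω, M n ω =
      ∑ s ∈ Finset.Icc 2 n,
        (fPoisson Ll l (ρ s ω) (fun j => ((X s ω j - X (s - 1) ω j : ℤ) : ℝ)) -
          Pf A Ll l (ρ (s - 1) ω))) :
    Martingale M ℱ μ ∧ ∀ n, ∫ ω, M n ω ∂μ = 0 := by
  have hDint : ∀ s, 2 ≤ s → Integrable (fun ω =>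
      fPoisson Ll l (ρ s ω) (fun j => ((X s ω j - X (s - 1) ω j : ℤ) : ℝ)) -
          Pf A Ll l (ρ (s - 1) ω)) μ := by
    intro s hs
    obtain ⟨n, rfl⟩ : ∃ n, s = n + 1 := ⟨s - 1, by omega⟩
    exact (fP_int hA hQT Ll l n).sub (Pf_int hA hQT Ll l n)
  have hMf : ∀ n, M n = fun ω => ∑ s ∈ Finset.Icc 2 n,
        (fPoisson Ll l (ρ s ω) (fun j => ((X s ω j - X (s - 1) ω j : ℤ) : ℝ)) -
          Pf A Ll l (ρ (s - 1) ω)) := fun n => funext (hM n)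
  have hint : ∀ n, Integrable (M n) μ := by
    intro n
    rw [hMf]
    exact integrable_finsetSum _ fun s hs => hDint s (Finset.mem_Icc.mp hs).1
  have hadm : ∀ n, Measurable[ℱ n] (M n) := by
    intro n
    rw [hMf]
    refine @Finset.measurable_sum _ _ _ _ _ _ (ℱ n) _ _ fun s hs => ?_
    have hs' := Finset.mem_Icc.mp hs
    have hr : Measurable[ℱ n] (ρ s) := (hQT.adapted_ρ s).mono (ℱ.mono hs'.2) le_rfl
    have hr' : Measurable[ℱ n] (ρ (s - 1)) :=
      (hQT.adapted_ρ (s - 1)).mono (ℱ.mono (by omega)) le_rfl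
    have hx : Measurable[ℱ n] (X s) := (hQT.adapted_X s).mono (ℱ.mono hs'.2) le_rfl
    have hx' : Measurable[ℱ n] (X (s - 1)) :=
      (hQT.adapted_X (s - 1)).mono (ℱ.mono (by omega)) le_rfl
    refine (@fP_meas k d Ω (ℱ n) Ll l _ hr
      (fun ω j => ((X s ω j - X (s - 1) ω j : ℤ) : ℝ)) ?_).sub
      (@Pf_meas k d Ω (ℱ n) A Ll l _ hr')
    exact @diff_meas d Ω (ℱ n) _ _ hx hx'
  have hmart : Martingale M ℱ μ := by
    refine martingale_nat (fun n => (hadm n).stronglyMeasurable) hint fun n => ?_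
    rcases Nat.eq_zero_or_pos n with rfl | hn
    · have h0 : M 0 = 0 := by rw [hMf]; funext ω; simp
      have h1 : M (0 + 1) = 0 := by rw [hMf]; funext ω; simp
      rw [h0, h1, condExp_zero]
    · have hs : M (n + 1) = M n + ((fun ω => fPoisson Ll l (ρ (n + 1) ω)
          (fun j => ((X (n + 1) ω j - X n ω j : ℤ) : ℝ))) - fun ω => Pf A Ll l (ρ n ω)) := by
        rw [hMf, hMf]
        funext ω
        rw [Finset.sum_Icc_succ_top (by omega)]
        rfl
      rw [hs]
      have e1 := condExp_add (hint n)
        ((fP_int hA hQT Ll l n).sub (Pf_int hA hQT Ll l n)) (ℱ n)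
      have e2 := condExp_sub (fP_int hA hQT Ll l n) (Pf_int hA hQT Ll l n) (ℱ n)
      have e3 := fP_condExp hA hQT Ll l n
      have e4 := condExp_of_stronglyMeasurable (μ := μ) (ℱ.le n)
        (hadm n).stronglyMeasurable (hint n)
      have e5 := condExp_of_stronglyMeasurable (μ := μ) (ℱ.le n)
        (@Pf_meas k d Ω (ℱ n) A Ll l _ (hQT.adapted_ρ n)).stronglyMeasurable
        (Pf_int hA hQT Ll l n)
      filter_upwards [e1, e2, e3] with ω h1 h2 h3
      rw [h1, Pi.add_apply, h2, Pi.sub_apply, h3, e4, e5]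
      simp
  refine ⟨hmart, fun n => ?_⟩
  have h := hmart.setIntegral_eq (Nat.zero_le n) (@MeasurableSet.univ _ (ℱ 0))
  rw [setIntegral_univ, setIntegral_univ] at h
  rw [← h, hMf]
  simp
end
end

section
/- Assume (H1). For i = 1,…,d let L_i be a solution of L_i - L^*(L_i) = Σ_{j=1}^{2d} (e_j·e_i) A_j^* A_j - m_i I, and for l ∈ ℝ^d with coordinates l_1,…,l_d set L_l = Σ_{i=1}^d l_i L_i and Γ_l = Σ_{i=1}^{2d} [ A_i^* A_i (e_i·l − m·l)² + 2 (e_i·l − m·l) A_i^* L_l A_i ]. Then the quadratic form identity Re Tr(ρ_∞ Γ_l) = Σ_{i,j=1}^d l_i l_j C_{ij} holds, where C_{ij} = δ_{ij}( Tr(A_i ρ_∞ A_i^*) + Tr(A_{i+d} ρ_∞ A_{i+d}^*) ) − m_i m_j + ( Tr(A_i ρ_∞ A_i^* L_j) + Tr(A_j ρ_∞ A_j^* L_i) − Tr(A_{i+d} ρ_∞ A_{i+d}^* L_j) − Tr(A_{j+d} ρ_∞ A_{j+d}^* L_i) ) − ( m_i Tr(ρ_∞ L_j) + m_j Tr(ρ_∞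 L_i) ) (real parts of traces being understood). -/
open MeasureTheory Filter Matrix Finset
open scoped ComplexOrder

noncomputable section

/-- The index `i ∈ {1,…,d}` viewed inside `Fin (2d)` (direction `+e_i`). -/
def lo {d : ℕ} (i : Fin d) : Fin (2 * d) := ⟨i, by have := i.isLt; omega⟩

/-- The index `i + d` viewed inside `Fin (2d)` (direction `-e_i`). -/
def hi {d : ℕ} (i : Fin d) : Fin (2 * d) := ⟨(i : ℕ) + d, by have := i.isLt; omega⟩

/-- The covariance matrix `C` of the Central Limit Theorem. -/
def Cmat {k d : ℕ} (A : Fin (2 * d) → Matrix (Fin k) (Fin k) ℂ)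
    (ρinf : Matrix (Fin k) (Fin k) ℂ) (LL : Fin d → Matrix (Fin k) (Fin k) ℂ)
    (i j : Fin d) : ℝ :=
  (if i = j then ((A (lo i) * ρinf * (A (lo i))ᴴ).trace).re
      + ((A (hi i) * ρinf * (A (hi i))ᴴ).trace).re else 0)
    - mvec A ρinf i * mvec A ρinf j
    + (((A (lo i) * ρinf * (A (lo i))ᴴ * LL j).trace).re
      + ((A (lo j) * ρinf * (A (lo j))ᴴ * LL i).trace).re
      - ((A (hi i) * ρinf * (A (hi i))ᴴ * LL j).trace).re
      - ((A (hi j) * ρinf * (A (hi j))ᴴ * LL i).trace).re)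
    - (mvec A ρinf i * ((ρinf * LL j).trace).re
      + mvec A ρinf j * ((ρinf * LL i).trace).re)

/-- The matrix `Γ_l = Σ_i [ (e_i·l − m·l)² A_i^* A_i + 2 (e_i·l − m·l) A_i^* L_l A_i ]`. -/
def Gammal {k d : ℕ} (A : Fin (2 * d) → Matrix (Fin k) (Fin k) ℂ)
    (ρinf Ll : Matrix (Fin k) (Fin k) ℂ) (l : Fin d → ℝ) : Matrix (Fin k) (Fin k) ℂ :=
  ∑ i, ((((∑ j, dirR d i j * l j) - ∑ j, mvec A ρinf j * l j) ^ 2) • ((A i)ᴴ * A i) +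
    (2 * ((∑ j, dirR d i j * l j) - ∑ j, mvec A ρinf j * l j)) • ((A i)ᴴ * Ll * A i))

theorem sum_lo_hi {d : ℕ} (f : Fin (2 * d) → ℝ) :
    ∑ i, f i = ∑ i : Fin d, (f (lo i) + f (hi i)) := by
  have h : 2 * d = d + d := by omega
  rw [← (finCongr h.symm).sum_comp f, Fin.sum_univ_add, ← Finset.sum_add_distrib]
  refine Finset.sum_congr rfl fun i _ => ?_
  congr 2
  apply Fin.ext
  simp [hi, add_comm]

theorem dirR_lo {d : ℕ} (i j : Fin d) : dirR d (lo i) j = if i = j then 1 else 0 := by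
  by_cases hij : i = j
  · subst hij; simp [dirR, dir, lo]
  · have : (j : ℕ) ≠ i := fun h => hij (Fin.ext h.symm)
    simp [dirR, dir, lo, hij, this]

theorem dirR_hi {d : ℕ} (i j : Fin d) : dirR d (hi i) j = if i = j then -1 else 0 := by
  by_cases hij : i = j
  · subst hij; simp [dirR, dir, hi]
  · have : (j : ℕ) ≠ i := fun h => hij (Fin.ext h.symm)
    simp [dirR, dir, hi, hij, this]

/-- The quadratic form identity
`Re Tr(ρ_∞ Γ_l) = Σ_{i,j} l_i l_j C_{ij}`, with `L_l = Σ_i l_i L_i`. -/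
theorem stmt12 {k d : ℕ} (hd : 1 ≤ d)
    (A : Fin (2 * d) → Matrix (Fin k) (Fin k) ℂ)
    (hA : ∑ j, (A j)ᴴ * A j = 1)
    (ρinf : Matrix (Fin k) (Fin k) ℂ) (hρinf : IsDensity ρinf)
    (hinv : (∑ j, A j * ρinf * (A j)ᴴ) = ρinf)
    (huniq : ∀ σ, IsDensity σ → (∑ j, A j * σ * (A j)ᴴ) = σ → σ = ρinf)
    (LL : Fin d → Matrix (Fin k) (Fin k) ℂ)
    (hLL : ∀ i : Fin d,
      LL i - (∑ j, (A j)ᴴ * LL i * A j) =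
        (∑ j, dirR d j i • ((A j)ᴴ * A j)) -
          mvec A ρinf i • (1 : Matrix (Fin k) (Fin k) ℂ))
    (l : Fin d → ℝ) (Ll : Matrix (Fin k) (Fin k) ℂ)
    (hLl : Ll = ∑ i, l i • LL i) :
    ((ρinf * Gammal A ρinf Ll l).trace).re =
      ∑ i, ∑ j, l i * l j * Cmat A ρinf LL i j := by
  obtain ⟨-, htr⟩ := hρinf
  set M : ℝ := ∑ j, mvec A ρinf j * l j with hM
  let p : Fin (2 * d) → ℝ := fun i => ((A i * ρinf * (A i)ᴴ).trace).re
  let q : Fin (2 * d) → Fin d → ℝ := fun i j => ((A i * ρinf * (A i)ᴴ * LL j).trace).re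
  let t : Fin d → ℝ := fun j => ((ρinf * LL j).trace).re
  let s : Fin (2 * d) → ℝ := fun i => ∑ j, dirR d i j * l j
  have hp1 : ∑ i, p i = 1 := by
    have := congrArg (fun X => (Matrix.trace X).re) hinv
    simpa [Matrix.trace_sum, htr, p] using this
  have hq1 : ∀ j, ∑ i, q i j = t j := by
    intro j
    have := congrArg (fun X => (Matrix.trace (X * LL j)).re) hinv
    simpa [Matrix.trace_sum, Finset.sum_mul, q, t] using this
  have hsp : ∑ i, s i * p i = M := by
    simp only [hM, mvec, s, p, Finset.sum_mul]
    rw [Finset.sum_comm]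
    refine Finset.sum_congr rfl fun i _ => Finset.sum_congr rfl fun j _ => ?_
    ring
  have hL : ((ρinf * Gammal A ρinf Ll l).trace).re =
      ∑ i, ((s i - M) ^ 2 * p i + 2 * (s i - M) * ∑ j, l j * q i j) := by
    rw [Gammal, Finset.mul_sum, Matrix.trace_sum, Complex.re_sum]
    refine Finset.sum_congr rfl fun i _ => ?_
    have e1 : (ρinf * ((A i)ᴴ * A i)).trace = (A i * ρinf * (A i)ᴴ).trace := by
      rw [← Matrix.mul_assoc, Matrix.trace_mul_comm, Matrix.mul_assoc]
    have e2 : ∀ X, (ρinf * ((A i)ᴴ * X * A i)).trace = (A i * ρinf * (A i)ᴴ * X).trace := by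
      intro X
      rw [← Matrix.mul_assoc, Matrix.trace_mul_comm]
      simp only [Matrix.mul_assoc]
    have e3 : ((A i * ρinf * (A i)ᴴ * Ll).trace).re = ∑ j, l j * q i j := by
      rw [hLl, Finset.mul_sum, Matrix.trace_sum, Complex.re_sum]
      refine Finset.sum_congr rfl fun j _ => ?_
      rw [Matrix.mul_smul, Matrix.trace_smul, Complex.smul_re, smul_eq_mul]
    rw [Matrix.mul_add, Matrix.mul_smul, Matrix.mul_smul, Matrix.trace_add, Matrix.trace_smul,
      Matrix.trace_smul, Complex.add_re, Complex.smul_re, Complex.smul_re, e1, e2, e3,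
      smul_eq_mul, smul_eq_mul]
  have hslo : ∀ i, s (lo i) = l i := by intro i; simp [s, dirR_lo]
  have hshi : ∀ i, s (hi i) = - l i := by intro i; simp [s, dirR_hi]
  have hT : ∑ i, ∑ j, l j * q i j = ∑ j, l j * t j := by
    rw [Finset.sum_comm]
    simp only [← Finset.mul_sum, hq1]
  have hL2 : ((ρinf * Gammal A ρinf Ll l).trace).re =
      ∑ i, s i ^ 2 * p i - M ^ 2 + 2 * ∑ i, s i * ∑ j, l j * q i j
        - 2 * M * ∑ j, l j * t j := by
    rw [hL]
    have : ∀ i, (s i - M) ^ 2 * p i + 2 * (s i - M) * ∑ j, l j * q i j =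
      s i ^ 2 * p i - 2 * M * (s i * p i) + M ^ 2 * p i
        + 2 * (s i * ∑ j, l j * q i j) - 2 * M * ∑ j, l j * q i j := by
      intro i; ring
    simp only [this, Finset.sum_add_distrib, Finset.sum_sub_distrib, ← Finset.mul_sum, hsp, hp1, hT]
    ring
  have hC : ∀ i j, l i * l j * Cmat A ρinf LL i j =
      (if i = j then l i * l j * (p (lo i) + p (hi i)) else 0)
      - (mvec A ρinf i * l i) * (mvec A ρinf j * l j)
      + l i * (l j * (q (lo i) j - q (hi i) j)) + l j * (l i * (q (lo j) i - q (hi j) i))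
      - (mvec A ρinf i * l i) * (l j * t j) - (mvec A ρinf j * l j) * (l i * t i) := by
    intro i j
    simp only [Cmat, p, q, t]
    split_ifs <;> ring
  have hQ : ∑ i, s i * ∑ j, l j * q i j = ∑ i, ∑ j, l i * (l j * (q (lo i) j - q (hi i) j)) := by
    rw [sum_lo_hi]
    refine Finset.sum_congr rfl fun i _ => ?_
    rw [hslo, hshi]
    simp only [mul_sub, Finset.sum_sub_distrib, Finset.mul_sum]
    simp [Finset.sum_neg_distrib, sub_eq_add_neg]
  have hQ' : ∑ i, ∑ j, l j * (l i * (q (lo j) i - q (hi j) i)) =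
      ∑ i, s i * ∑ j, l j * q i j := by
    rw [Finset.sum_comm, hQ]
  have hS : ∑ i, s i ^ 2 * p i =
      ∑ i, ∑ j, (if i = j then l i * l j * (p (lo i) + p (hi i)) else 0) := by
    rw [sum_lo_hi]
    refine Finset.sum_congr rfl fun i _ => ?_
    rw [hslo, hshi]
    simp
    ring
  have hMM : ∑ i, ∑ j, (mvec A ρinf i * l i) * (mvec A ρinf j * l j) = M * M := by
    rw [hM, Finset.sum_mul_sum]
  have hMT : ∑ i, ∑ j, (mvec A ρinf i * l i) * (l j * t j) = M * ∑ j, l j * t j := by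
    rw [hM, Finset.sum_mul_sum]
  have hTM : ∑ i, ∑ j, (mvec A ρinf j * l j) * (l i * t i) = M * ∑ j, l j * t j := by
    rw [Finset.sum_comm, hMT]
  rw [hL2]
  simp only [hC, Finset.sum_add_distrib, Finset.sum_sub_distrib]
  rw [hQ', ← hQ, ← hS, hMM, hMT, hTM]
  ring
end
end

section
/- (One-dimensional variance formula.) Let d = 1 and let A_1, A_2 be k×k complex matrices with A_1^* A_1 + A_2^* A_2 = I; assume the map L(ρ) = A_1 ρ A_1^* + A_2 ρ A_2^* admits a unique invariant state ρ_∞. Set m = Tr(A_1 ρ_∞ A_1^*) − Tr(A_2 ρ_∞ A_2^*), and let L be a solution of L − L^*(L) = 2 A_1^* A_1 − (1+m) I, where L^*(X) = A_1^* X A_1 + A_2^* X A_2. Then m = 1 − 2 Tr(A_2 ρ_∞ A_2^*) and the asymptotic variance of the associated open quantum random walk satisfies σ² = 1 − m² + 4( Re Tr(ρ_∞ A_1^* L A_1) − Tr(A_1 ρ_∞ A_1^*) · Re Tr(ρ_∞ L) ), where σ² = Re Tr(ρ_∞ Γ) with Γ = A_1^* A_1 (1−m)² + A_2^* A_2 (1+m)²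 + 2(1−m) A_1^* L A_1 − 2(1+m) A_2^* L A_2. -/
open MeasureTheory Filter Matrix Finset
open scoped ComplexOrder

noncomputable section

/-- (One-dimensional variance formula.) For an open quantum random walk
on `ℤ` with jump operators `A₁, A₂`, unique invariant state `ρ_∞`, drift
`m = Tr(A₁ρ_∞A₁^*) − Tr(A₂ρ_∞A₂^*)` and `L` solving `L − L^*(L) = 2A₁^*A₁ − (1+m)I`,
one has `m = 1 − 2Tr(A₂ρ_∞A₂^*)` and the asymptotic variance `σ² = Re Tr(ρ_∞ Γ)`
satisfies `σ² = 1 − m² + 4(Re Tr(ρ_∞A₁^*LA₁) − Tr(A₁ρ_∞A₁^*)·Re Tr(ρ_∞L))`. -/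
theorem stmt13 {k : ℕ}
    (A₁ A₂ : Matrix (Fin k) (Fin k) ℂ)
    (hA : A₁ᴴ * A₁ + A₂ᴴ * A₂ = 1)
    (ρinf : Matrix (Fin k) (Fin k) ℂ) (hρinf : IsDensity ρinf)
    (hinv : A₁ * ρinf * A₁ᴴ + A₂ * ρinf * A₂ᴴ = ρinf)
    (huniq : ∀ σ, IsDensity σ → A₁ * σ * A₁ᴴ + A₂ * σ * A₂ᴴ = σ → σ = ρinf)
    (m : ℝ)
    (hm : m = ((A₁ * ρinf * A₁ᴴ).trace).re - ((A₂ * ρinf * A₂ᴴ).trace).re)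
    (L : Matrix (Fin k) (Fin k) ℂ)
    (hL : L - (A₁ᴴ * L * A₁ + A₂ᴴ * L * A₂) =
      (2 : ℂ) • (A₁ᴴ * A₁) - (1 + m : ℝ) • (1 : Matrix (Fin k) (Fin k) ℂ))
    (Γ : Matrix (Fin k) (Fin k) ℂ)
    (hΓ : Γ = ((1 - m) ^ 2) • (A₁ᴴ * A₁) + ((1 + m) ^ 2) • (A₂ᴴ * A₂) +
      (2 * (1 - m)) • (A₁ᴴ * L * A₁) - (2 * (1 + m)) • (A₂ᴴ * L * A₂)) :
    m = 1 - 2 * ((A₂ * ρinf * A₂ᴴ).trace).re ∧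
    ((ρinf * Γ).trace).re =
      1 - m ^ 2 +
        4 * (((ρinf * (A₁ᴴ * L * A₁)).trace).re -
          ((A₁ * ρinf * A₁ᴴ).trace).re * ((ρinf * L).trace).re) := by
  have hcyc : ∀ A X : Matrix (Fin k) (Fin k) ℂ,
      (ρinf * (Aᴴ * X * A)).trace = (A * ρinf * Aᴴ * X).trace := by
    intro A X
    rw [← Matrix.mul_assoc, Matrix.trace_mul_comm]
    simp only [Matrix.mul_assoc]
  have hcyc1 : ∀ A : Matrix (Fin k) (Fin k) ℂ,
      (ρinf * (Aᴴ * A)).trace = (A * ρinf * Aᴴ).trace := by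
    intro A
    have h := hcyc A 1
    simpa using h
  have h1 : ((A₁ * ρinf * A₁ᴴ).trace).re + ((A₂ * ρinf * A₂ᴴ).trace).re = 1 := by
    rw [← Complex.add_re, ← Matrix.trace_add, hinv, hρinf.2, Complex.one_re]
  have h2 : ((ρinf * (A₁ᴴ * L * A₁)).trace).re + ((ρinf * (A₂ᴴ * L * A₂)).trace).re
      = ((ρinf * L).trace).re := by
    rw [hcyc, hcyc, ← Complex.add_re, ← Matrix.trace_add, ← Matrix.add_mul, hinv]
  refine ⟨by linarith, ?_⟩
  have h3 : ((ρinf * Γ).trace).re =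
      (1 - m) ^ 2 * ((A₁ * ρinf * A₁ᴴ).trace).re + (1 + m) ^ 2 * ((A₂ * ρinf * A₂ᴴ).trace).re
      + 2 * (1 - m) * ((ρinf * (A₁ᴴ * L * A₁)).trace).re
      - 2 * (1 + m) * ((ρinf * (A₂ᴴ * L * A₂)).trace).re := by
    rw [hΓ]
    simp only [Matrix.mul_add, Matrix.mul_sub, Matrix.mul_smul, Matrix.trace_add,
      Matrix.trace_sub, Matrix.trace_smul, Complex.add_re, Complex.sub_re, Complex.smul_re,
      smul_eq_mul, hcyc1]
  rw [h3, ← h2, hm]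
  have hq : ((A₂ * ρinf * A₂ᴴ).trace).re = 1 - ((A₁ * ρinf * A₁ᴴ).trace).re := by linarith
  rw [hq]
  ring
end
end

section
/- (Central Limit Theorem for quantum measurement records.) Let M_1,…,M_n be k×k complex matrices with Σ_{i=1}^n M_i^* M_i = I, and assume the quantum channel L(ρ) = Σ_{i=1}^n M_i ρ M_i^* admits a unique invariant state ρ_∞. Let (ρ_t, X_t)_{t≥1} be the associated quantum trajectory: adapted to a filtration (F_t), with ρ_t a density matrix and X_t ∈ {e_1,…,e_n} ⊂ ℝ^n, such that P(X_{t+1} = e_i | F_t) = Tr(M_i ρ_t M_i^*) and, almost surely on {X_{t+1} = e_i}, ρ_{t+1} = M_i ρ_t M_i^* / Tr(M_i ρ_t M_i^*). Set S_t = Σ_{s=1}^t X_s, m = Σ_{i=1}^n Tr(M_i ρ_∞ M_i^*) e_i ∈ ℝ^n, and for i = 1,…,n let L_i solve L_i − L^*(L_i) = M_i^* M_i − m_i I where L^*(X) = Σ_{j=1}^n M_j^* X M_j. Then S_t/t → m almost surely, and (S_t − t m)/√t converges in distribution to the Gaussian N(0, C) on ℝ^n with C_{ij} = δ_{ij} Tr(M_i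 ρ_∞ M_i^*) − m_i m_j + ( Tr(M_i ρ_∞ M_i^* L_j) + Tr(M_j ρ_∞ M_j^* L_i) ) − ( m_i Tr(ρ_∞ L_j) + m_j Tr(ρ_∞ L_i) ) (real parts of traces being understood), this matrix being symmetric positive semidefinite. -/
open MeasureTheory Filter Matrix Finset
open scoped ComplexOrder

noncomputable section

/-- The quantum trajectory of the repeated measurement scheme for the quantum channel
with Kraus operators `M₁, …, Mₙ`: `Y_{t+1} = i` (outcome `e_i`) with conditional
probability `Tr(M_i ρ_t M_i^*)`, the state being updated by wave-packet reduction. -/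
structure IsMeasTraj {k n : ℕ} {Ω : Type} {mΩ : MeasurableSpace Ω}
    (Mk : Fin n → Matrix (Fin k) (Fin k) ℂ)
    (μ : Measure Ω) (ℱ : Filtration ℕ mΩ)
    (ρ : ℕ → Ω → Matrix (Fin k) (Fin k) ℂ)
    (Y : ℕ → Ω → Fin n) : Prop where
  density : ∀ t, ∀ᵐ ω ∂μ, IsDensity (ρ t ω)
  adapted_ρ : ∀ t, Measurable[ℱ t] (ρ t)
  adapted_Y : ∀ t, Measurable[ℱ t] (Y t)
  prob : ∀ (t : ℕ) (i : Fin n),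
    μ[(fun ω => if Y (t + 1) ω = i then (1 : ℝ) else 0) | ℱ t]
      =ᵐ[μ] fun ω => ((Mk i * ρ t ω * (Mk i)ᴴ).trace).re
  update : ∀ (t : ℕ) (i : Fin n), ∀ᵐ ω ∂μ,
    Y (t + 1) ω = i →
      ρ (t + 1) ω = ((Mk i * ρ t ω * (Mk i)ᴴ).trace)⁻¹ • (Mk i * ρ t ω * (Mk i)ᴴ)

/-- The drift vector `m = Σ_i Tr(M_i ρ_∞ M_i^*) e_i ∈ ℝ^n`. -/
def mrec {k n : ℕ} (Mk : Fin n → Matrix (Fin k) (Fin k) ℂ)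
    (ρinf : Matrix (Fin k) (Fin k) ℂ) : Fin n → ℝ :=
  fun i => ((Mk i * ρinf * (Mk i)ᴴ).trace).re

/-- The covariance matrix of the CLT for quantum measurement records. -/
def Crec {k n : ℕ} (Mk : Fin n → Matrix (Fin k) (Fin k) ℂ)
    (ρinf : Matrix (Fin k) (Fin k) ℂ) (LL : Fin n → Matrix (Fin k) (Fin k) ℂ)
    (i j : Fin n) : ℝ :=
  (if i = j then ((Mk i * ρinf * (Mk i)ᴴ).trace).re else 0)
    - mrec Mk ρinf i * mrec Mk ρinf j
    + (((Mk i * ρinf * (Mk i)ᴴ * LL j).trace).re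
      + ((Mk j * ρinf * (Mk j)ᴴ * LL i).trace).re)
    - (mrec Mk ρinf i * ((ρinf * LL j).trace).re
      + mrec Mk ρinf j * ((ρinf * LL i).trace).re)

/-- Bounded martingale differences. -/
structure IsMD {Ω : Type} {mΩ : MeasurableSpace Ω} (μ : Measure Ω) (ℱ : Filtration ℕ mΩ)
    (D : ℕ → Ω → ℝ) (K : ℝ) : Prop where
  meas : ∀ s, Measurable[ℱ (s + 1)] (D s)
  bdd : ∀ s, ∀ᵐ ω ∂μ, |D s ω| ≤ K
  orth : ∀ s (Z : Ω → ℝ), Measurable[ℱ s] Z → (∃ C, ∀ᵐ ω ∂μ, |Z ω| ≤ C) →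
    ∫ ω, Z ω * D s ω ∂μ = 0

section MD
set_option linter.unusedSectionVars false
variable {Ω : Type} {mΩ : MeasurableSpace Ω} {μ : Measure Ω} [IsProbabilityMeasure μ]
  {ℱ : Filtration ℕ mΩ} {D : ℕ → Ω → ℝ} {K : ℝ}

lemma IsMD.K_nonneg (h : IsMD μ ℱ D K) : 0 ≤ K := by
  obtain ⟨ω, hω⟩ := (h.bdd 0).exists
  exact (abs_nonneg _).trans hω

lemma IsMD.meas' (h : IsMD μ ℱ D K) (s : ℕ) : Measurable (D s) :=
  (h.meas s).mono (ℱ.le _) le_rfl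

lemma IsMD.measlt (h : IsMD μ ℱ D K) {s t : ℕ} (hst : s < t) : Measurable[ℱ t] (D s) :=
  (h.meas s).mono (ℱ.mono hst) le_rfl

lemma IsMD.bddall (h : IsMD μ ℱ D K) : ∀ᵐ ω ∂μ, ∀ s, |D s ω| ≤ K :=
  ae_all_iff.2 h.bdd

lemma integrable_of_abs_le {f : Ω → ℝ} (hf : Measurable f) (C : ℝ)
    (h : ∀ᵐ ω ∂μ, |f ω| ≤ C) : Integrable f μ :=
  Integrable.of_bound hf.aestronglyMeasurable C (by simpa using h)

lemma IsMD.sum_meas (h : IsMD μ ℱ D K) (t : ℕ) :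
    Measurable[ℱ t] (fun ω => ∑ s ∈ range t, D s ω) := by
  refine Finset.measurable_fun_sum _ fun s hs => h.measlt (by simpa using hs)

lemma IsMD.sum_bdd (h : IsMD μ ℱ D K) (t : ℕ) :
    ∀ᵐ ω ∂μ, |∑ s ∈ range t, D s ω| ≤ t * K := by
  filter_upwards [h.bddall] with ω hω
  calc _ ≤ ∑ s ∈ range t, |D s ω| := abs_sum_le_sum_abs _ _
    _ ≤ ∑ s ∈ range t, K := sum_le_sum fun s _ => hω s
    _ = _ := by simp

lemma IsMD.sq_le (h : IsMD μ ℱ D K) (t : ℕ) :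
    ∫ ω, (∑ s ∈ range t, D s ω) ^ 2 ∂μ ≤ t * K ^ 2 := by
  induction t with
  | zero => simp
  | succ t ih =>
    have hK := h.K_nonneg
    have hm := (h.sum_meas t).mono (ℱ.le t) le_rfl
    have hD := h.meas' t
    have i1 : Integrable (fun ω => (∑ s ∈ range t, D s ω) ^ 2) μ := by
      refine integrable_of_abs_le (hm.pow_const 2) ((t * K) ^ 2) ?_
      filter_upwards [h.sum_bdd t] with ω hω
      rw [abs_pow]; gcongr
    have i2 : Integrable (fun ω => (∑ s ∈ range t, D s ω) * D t ω) μ := by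
      refine integrable_of_abs_le (hm.mul hD) ((t * K) * K) ?_
      filter_upwards [h.sum_bdd t, h.bdd t] with ω hω h2
      rw [abs_mul]; gcongr
    have i3 : Integrable (fun ω => D t ω ^ 2) μ := by
      refine integrable_of_abs_le (hD.pow_const 2) (K ^ 2) ?_
      filter_upwards [h.bdd t] with ω h2
      rw [abs_pow]; gcongr
    have e : ∀ ω, (∑ s ∈ range (t+1), D s ω) ^ 2 =
        (∑ s ∈ range t, D s ω) ^ 2 + 2 * ((∑ s ∈ range t, D s ω) * D t ω) + D t ω ^ 2 := by
      intro ω; rw [sum_range_succ]; ring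
    simp_rw [e]
    have i4 : Integrable (fun ω => (∑ s ∈ range t, D s ω) ^ 2 +
        2 * ((∑ s ∈ range t, D s ω) * D t ω)) μ := i1.add (i2.const_mul 2)
    rw [integral_add i4 i3, integral_add i1 (i2.const_mul 2),
      integral_const_mul, h.orth t _ (h.sum_meas t) ⟨_, h.sum_bdd t⟩]
    have : ∫ ω, D t ω ^ 2 ∂μ ≤ K ^ 2 := by
      calc _ ≤ ∫ ω, K ^ 2 ∂μ := by
            refine integral_mono_ae i3 (by simp) ?_
            filter_upwards [h.bdd t] with ω h2
            exact sq_le_sq' (abs_le.1 h2).1 (abs_le.1 h2).2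
        _ = _ := by simp
    push_cast
    linarith

lemma IsMD.slln (h : IsMD μ ℱ D K) :
    ∀ᵐ ω ∂μ, Tendsto (fun t : ℕ => (∑ s ∈ range t, D s ω) / t) atTop (nhds 0) := by
  have hK := h.K_nonneg
  have key : ∀ᵐ ω ∂μ, Tendsto (fun j : ℕ => (∑ s ∈ range (j^2), D s ω) / ((j^2 : ℕ) : ℝ))
      atTop (nhds 0) := by
    have hmeas : ∀ t, Measurable (fun ω => ∑ s ∈ range t, D s ω) := fun t =>
      (h.sum_meas t).mono (ℱ.le t) le_rfl
    have hle : ∀ j : ℕ, ∫⁻ ω, ENNReal.ofReal (((∑ s ∈ range (j^2), D s ω) / ((j^2 : ℕ) : ℝ))^2) ∂μ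
        ≤ ENNReal.ofReal (K^2 * (1 / (j:ℝ)^2)) := by
      intro j
      rw [← ofReal_integral_eq_lintegral_ofReal]
      · apply ENNReal.ofReal_le_ofReal
        simp_rw [div_pow]
        rw [integral_div]
        rcases Nat.eq_zero_or_pos j with rfl | hj
        · simp
        have := h.sq_le (j^2)
        have hj' : (0:ℝ) < j := by exact_mod_cast hj
        rw [div_le_iff₀ (by positivity)]
        refine this.trans (le_of_eq ?_)
        push_cast; field_simp
      · refine integrable_of_abs_le (((hmeas _).div_const _).pow_const 2)
          ((((j^2 : ℕ) : ℝ) * K / ((j^2 : ℕ) : ℝ))^2) ?_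
        filter_upwards [h.sum_bdd (j^2)] with ω hω
        rw [abs_pow, abs_div, Nat.abs_cast]
        gcongr
      · exact ae_of_all _ fun ω => sq_nonneg _
    have hsum : ∫⁻ ω, ∑' j : ℕ, ENNReal.ofReal
        (((∑ s ∈ range (j^2), D s ω) / ((j^2 : ℕ) : ℝ))^2) ∂μ ≠ ⊤ := by
      rw [lintegral_tsum]
      · refine ne_top_of_le_ne_top ?_ (ENNReal.tsum_le_tsum hle)
        rw [← ENNReal.ofReal_tsum_of_nonneg]
        · exact ENNReal.ofReal_ne_top
        · intro j; positivity
        · exact (Real.summable_one_div_nat_pow.2 one_lt_two).mul_left _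
      · intro j
        exact (((hmeas _).div_const _).pow_const 2).ennreal_ofReal.aemeasurable
    have := ae_lt_top' ?_ hsum
    · filter_upwards [this] with ω hω
      have h1 := ENNReal.tendsto_atTop_zero_of_tsum_ne_top hω.ne
      have h2 := (ENNReal.tendsto_toReal (ENNReal.zero_ne_top)).comp h1
      have h3 : Tendsto (fun j : ℕ => ((∑ s ∈ range (j^2), D s ω) / ((j^2 : ℕ) : ℝ))^2)
          atTop (nhds 0) := by
        refine h2.congr fun j => ?_
        simp only [Function.comp]
        rw [ENNReal.toReal_ofReal (sq_nonneg _)]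
      have h4 := h3.sqrt
      simp only [Real.sqrt_sq_eq_abs, Real.sqrt_zero] at h4
      exact (tendsto_zero_iff_abs_tendsto_zero _).2 h4
    · exact AEMeasurable.tsum fun j =>
        (((hmeas _).div_const _).pow_const 2).ennreal_ofReal.aemeasurable
  filter_upwards [key, h.bddall] with ω h1 h2
  have h3 : Tendsto (fun t : ℕ => ((∑ s ∈ range t, D s ω) + K * t) / t) atTop (nhds K) := by
    refine tendsto_div_of_monotone_of_exists_subseq_tendsto_div
      (fun t : ℕ => (∑ s ∈ range t, D s ω) + K * t) K ?_ ?_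
    · refine monotone_nat_of_le_succ fun t => ?_
      simp only [sum_range_succ]
      push_cast
      have := (abs_le.1 (h2 t)).1
      linarith
    · intro a ha
      refine ⟨fun j => j^2, ?_, ?_, ?_⟩
      · have : Tendsto (fun j : ℕ => (1 + 1 / (j:ℝ))^2) atTop (nhds ((1 + 0)^2)) :=
          (tendsto_const_nhds.add tendsto_one_div_atTop_nhds_zero_nat).pow 2
        have h5 := this.eventually_lt_const (u := a) (by simpa using ha)
        filter_upwards [h5, eventually_gt_atTop 0] with j hj hj0
        have hj' : (0:ℝ) < j := by exact_mod_cast hj0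
        have : (((j + 1)^2 : ℕ) : ℝ) = (1 + 1 / (j:ℝ))^2 * ((j^2 : ℕ) : ℝ) := by
          push_cast; field_simp
        rw [this]
        gcongr
      · exact tendsto_pow_atTop two_ne_zero
      · have h6 := h1.add_const K
        rw [zero_add] at h6
        refine h6.congr' ?_
        filter_upwards [eventually_gt_atTop 0] with j hj0
        have hj' : (0:ℝ) < j := by exact_mod_cast hj0
        push_cast; field_simp
  have h4 := h3.sub_const K
  rw [sub_self] at h4
  refine h4.congr' ?_
  filter_upwards [eventually_gt_atTop 0] with j hj0
  have hj' : (0:ℝ) < j := by exact_mod_cast hj0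
  field_simp; ring

lemma IsMD.corth (h : IsMD μ ℱ D K) (s : ℕ) (Z : Ω → ℂ) (hZ : Measurable[ℱ s] Z)
    (C : ℝ) (hC : ∀ᵐ ω ∂μ, ‖Z ω‖ ≤ C) : ∫ ω, Z ω * (D s ω : ℂ) ∂μ = 0 := by
  have hi : Integrable (fun ω => Z ω * (D s ω : ℂ)) μ := by
    refine Integrable.of_bound (C := C * K) ?_ ?_
    · exact (((hZ.mono (ℱ.le s) le_rfl)).mul
        (Complex.measurable_ofReal.comp (h.meas' s))).aestronglyMeasurable
    · filter_upwards [hC, h.bdd s] with ω h1 h2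
      rw [norm_mul, Complex.norm_real, Real.norm_eq_abs]
      have := h.K_nonneg
      have := (norm_nonneg _).trans h1
      gcongr
  apply Complex.ext
  · have := Complex.reCLM.integral_comp_comm hi
    simp only [Complex.reCLM_apply, Complex.mul_re, Complex.ofReal_re, Complex.ofReal_im, mul_zero,
      sub_zero] at this
    rw [← this, Complex.zero_re]
    refine h.orth s _ (Complex.measurable_re.comp hZ) ⟨C, ?_⟩
    filter_upwards [hC] with ω h1 using (Complex.abs_re_le_norm _).trans h1
  · have := Complex.imCLM.integral_comp_comm hi
    simp only [Complex.imCLM_apply, Complex.mul_im, Complex.ofReal_re, Complex.ofReal_im, mul_zero,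
      zero_add] at this
    rw [← this, Complex.zero_im]
    refine h.orth s _ (Complex.measurable_im.comp hZ) ⟨C, ?_⟩
    filter_upwards [hC] with ω h1 using (Complex.abs_im_le_norm _).trans h1

lemma exp_rem_bound (K : ℝ) (hK : 0 ≤ K) : ∃ C : ℝ, 0 ≤ C ∧ ∀ x d : ℝ, 0 ≤ x → x ≤ 1 → |d| ≤ K →
    ‖Complex.exp (Complex.I * (x * d : ℝ) + ((x ^ 2 * d ^ 2 / 2 : ℝ) : ℂ)) - 1
      - Complex.I * (x * d : ℝ)‖ ≤ C * x ^ 3 := by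
  refine ⟨(1/2 + K/8 + (1 + K/2)^3 * Real.exp (K * (1 + K/2))) * K^3, by positivity, ?_⟩
  intro x d hx hx1 hd
  obtain ⟨y, hy⟩ : ∃ y, y = x * d := ⟨_, rfl⟩
  have hyK : |y| ≤ x * K := by rw [hy, abs_mul, abs_of_nonneg hx]; gcongr
  have hyK' : |y| ≤ K := hyK.trans (by nlinarith)
  have e1 : x ^ 2 * d ^ 2 / 2 = y^2/2 := by rw [hy]; ring
  rw [e1, ← hy]
  set z : ℂ := Complex.I * (y : ℝ) + ((y^2/2 : ℝ) : ℂ) with hz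
  have hzn : ‖z‖ ≤ |y| * (1 + K/2) := by
    calc ‖z‖ ≤ ‖Complex.I * (y : ℝ)‖ + ‖((y^2/2 : ℝ) : ℂ)‖ := norm_add_le _ _
      _ = |y| + |y|^2/2 := by
        rw [norm_mul, Complex.norm_I, Complex.norm_real, Complex.norm_real, Real.norm_eq_abs,
          Real.norm_eq_abs, abs_of_nonneg (a := y^2/2) (by positivity), sq_abs, one_mul]
      _ ≤ _ := by nlinarith [abs_nonneg y]
  have h3 := Complex.norm_exp_sub_sum_le_norm_mul_exp z 3
  have e2 : ∑ m ∈ range 3, z ^ m / (m.factorial : ℂ) = 1 + z + z^2/2 := by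
    simp [sum_range_succ, Nat.factorial]
  rw [e2] at h3
  have e3 : Complex.exp z - 1 - Complex.I * (y : ℝ) =
      (Complex.exp z - (1 + z + z^2/2)) + (Complex.I * ((y^3/2 : ℝ) : ℂ) + ((y^4/8 : ℝ) : ℂ)) := by
    rw [hz]; push_cast; ring_nf; simp only [Complex.I_sq]; ring
  rw [e3]
  calc _ ≤ ‖Complex.exp z - (1 + z + z^2/2)‖ + (‖Complex.I * ((y^3/2 : ℝ) : ℂ)‖ + ‖((y^4/8 : ℝ) : ℂ)‖) :=
        (norm_add_le _ _).trans (by gcongr; exact norm_add_le _ _)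
    _ ≤ (|y| * (1 + K/2))^3 * Real.exp (K * (1 + K/2)) + (|y|^3/2 + |y|^4/8) := by
        gcongr
        · refine h3.trans ?_
          gcongr
          exact hzn.trans (by gcongr)
        · rw [norm_mul, Complex.norm_I, Complex.norm_real, Real.norm_eq_abs, one_mul, abs_div,
            abs_pow]; norm_num
        · rw [Complex.norm_real, Real.norm_eq_abs, abs_div, abs_pow]; norm_num
    _ ≤ (|y| * (1 + K/2))^3 * Real.exp (K * (1 + K/2)) + (|y|^3/2 + |y|^3 * K/8) := by
        have : |y|^4 ≤ |y|^3 * K := by rw [pow_succ]; gcongr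
        linarith
    _ = (1/2 + K/8 + (1 + K/2)^3 * Real.exp (K * (1 + K/2))) * |y|^3 := by ring
    _ ≤ (1/2 + K/8 + (1 + K/2)^3 * Real.exp (K * (1 + K/2))) * (x * K)^3 := by gcongr
    _ = _ := by ring

lemma IsMD.clt (h : IsMD μ ℱ D K) (σ : ℝ)
    (hσ : ∀ᵐ ω ∂μ, Tendsto (fun t : ℕ => (∑ s ∈ range t, D s ω ^ 2) / t) atTop (nhds σ)) :
    Tendsto (fun t : ℕ => ∫ ω, Complex.exp (Complex.I * (((∑ s ∈ range t, D s ω) / Real.sqrt t : ℝ) : ℂ)) ∂μ)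
      atTop (nhds (Complex.exp (-((σ / 2 : ℝ) : ℂ)))) := by
  have hK := h.K_nonneg
  obtain ⟨C, hC0, hC⟩ := exp_rem_bound K hK
  set Z : ℝ → ℕ → Ω → ℂ := fun x s ω => Complex.exp (Complex.I * ((x * ∑ r ∈ range s, D r ω : ℝ) : ℂ)
    + ((x ^ 2 * (∑ r ∈ range s, D r ω ^ 2) / 2 : ℝ) : ℂ)) with hZ
  have hZm : ∀ x s, Measurable[ℱ s] (Z x s) := by
    intro x s
    have h1 := h.sum_meas s
    have h2 : Measurable[ℱ s] (fun ω => ∑ r ∈ range s, D r ω ^ 2) :=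
      Finset.measurable_fun_sum _ fun r hr => (h.measlt (by simpa using hr)).pow_const 2
    refine Complex.measurable_exp.comp (Measurable.add ?_ ?_)
    · exact (Complex.measurable_ofReal.comp (h1.const_mul x)).const_mul _
    · exact Complex.measurable_ofReal.comp ((h2.const_mul _).div_const _)
  have hZn : ∀ x s ω, ‖Z x s ω‖ = Real.exp (x ^ 2 * (∑ r ∈ range s, D r ω ^ 2) / 2) := by
    intro x s ω
    rw [hZ]
    simp only [Complex.norm_exp, Complex.add_re, Complex.I_mul_re, Complex.ofReal_im, neg_zero,
      Complex.ofReal_re, zero_add]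
  have hQ : ∀ᵐ ω ∂μ, ∀ s : ℕ, ∑ r ∈ range s, D r ω ^ 2 ≤ s * K ^ 2 := by
    filter_upwards [h.bddall] with ω hω s
    calc _ ≤ ∑ r ∈ range s, K^2 := sum_le_sum fun r _ => sq_le_sq' (abs_le.1 (hω r)).1 (abs_le.1 (hω r)).2
      _ = _ := by simp
  have hZb : ∀ (t : ℕ) (x : ℝ), x ^ 2 * t ≤ 1 → ∀ s ≤ t, ∀ᵐ ω ∂μ, ‖Z x s ω‖ ≤ Real.exp (K^2/2) := by
    intro t x hx s hs
    filter_upwards [hQ] with ω hω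
    rw [hZn]
    apply Real.exp_le_exp.2
    have h1 := hω s
    have h2 : (s:ℝ) ≤ t := by exact_mod_cast hs
    have : x^2 * (∑ r ∈ range s, D r ω ^ 2) ≤ K^2 := by
      calc _ ≤ x^2 * (s * K^2) := by gcongr
        _ ≤ x^2 * (t * K^2) := by gcongr
        _ = (x^2 * t) * K^2 := by ring
        _ ≤ 1 * K^2 := by gcongr
        _ = _ := one_mul _
    linarith
  have hZi : ∀ (t : ℕ) (x : ℝ), x ^ 2 * t ≤ 1 → ∀ s ≤ t, Integrable (Z x s) μ := by
    intro t x hx s hs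
    exact Integrable.of_bound (((hZm x s).mono (ℱ.le s) le_rfl).aestronglyMeasurable) _ (hZb t x hx s hs)
  have step : ∀ (t : ℕ) (x : ℝ), 0 ≤ x → x ≤ 1 → x ^ 2 * t ≤ 1 → ∀ s ≤ t,
      ‖∫ ω, Z x s ω ∂μ - 1‖ ≤ s * (Real.exp (K^2/2) * (C * x^3)) := by
    intro t x hx0 hx1 hx s
    induction s with
    | zero => intro _; simp [hZ]
    | succ s ih =>
      intro hs
      have ih := ih (by omega)
      have i1 := hZi t x hx s (by omega)
      have i2 : Integrable (fun ω => Complex.I * x * (Z x s ω * (D s ω : ℂ))) μ := by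
        refine Integrable.const_mul ?_ _
        refine i1.mul_bdd (c := K) (Complex.measurable_ofReal.comp (h.meas' s)).aestronglyMeasurable ?_
        filter_upwards [h.bdd s] with ω hω
        simpa using hω
      have i3 := hZi t x hx (s+1) hs
      have e : ∫ ω, Z x (s+1) ω ∂μ - 1 = (∫ ω, Z x s ω ∂μ - 1) +
          ∫ ω, (Z x (s+1) ω - Z x s ω - Complex.I * x * (Z x s ω * (D s ω : ℂ))) ∂μ := by
        have i4 : Integrable (fun ω => Z x (s+1) ω - Z x s ω) μ := i3.sub i1
        rw [integral_sub i4 i2, integral_sub i3 i1, integral_const_mul,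
          h.corth s _ (hZm x s) _ (hZb t x hx s (by omega))]
        ring
      rw [e]
      have : ‖∫ ω, (Z x (s+1) ω - Z x s ω - Complex.I * x * (Z x s ω * (D s ω : ℂ))) ∂μ‖
          ≤ Real.exp (K^2/2) * (C * x^3) := by
        refine (norm_integral_le_of_norm_le_const (C := Real.exp (K^2/2) * (C * x^3)) ?_).trans (by simp)
        filter_upwards [hZb t x hx s (by omega), h.bdd s] with ω h1 h2
        have e2 : Z x (s+1) ω = Z x s ω * Complex.exp (Complex.I * (x * D s ω : ℝ) + ((x ^ 2 * D s ω ^ 2 / 2 : ℝ) : ℂ)) := by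
          rw [hZ]
          simp only [sum_range_succ]
          rw [← Complex.exp_add]
          congr 1
          push_cast; ring
        have e3 : Z x (s+1) ω - Z x s ω - Complex.I * x * (Z x s ω * (D s ω : ℂ)) =
            Z x s ω * (Complex.exp (Complex.I * (x * D s ω : ℝ) + ((x ^ 2 * D s ω ^ 2 / 2 : ℝ) : ℂ)) - 1
              - Complex.I * (x * D s ω : ℝ)) := by
          rw [e2]; push_cast; ring
        rw [e3, norm_mul]
        have := hC x (D s ω) hx0 hx1 h2
        gcongr
      refine (norm_add_le _ _).trans ?_
      push_cast
      linarith
  -- now the limit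
  have hx : ∀ t : ℕ, 1 ≤ t → (1 / Real.sqrt t) ^ 2 * t = 1 ∧ 0 ≤ 1 / Real.sqrt t ∧ 1 / Real.sqrt t ≤ 1 := by
    intro t ht
    have ht' : (1:ℝ) ≤ t := by exact_mod_cast ht
    refine ⟨?_, by positivity, ?_⟩
    · rw [div_pow, Real.sq_sqrt (by positivity)]; field_simp
    · rw [div_le_one (by positivity)]; exact Real.one_le_sqrt.2 ht'
  have hsq : Tendsto (fun t : ℕ => 1 / Real.sqrt t) atTop (nhds 0) := by
    simp only [one_div]
    exact tendsto_inv_atTop_zero.comp (Real.tendsto_sqrt_atTop.comp tendsto_natCast_atTop_atTop)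
  have L1 : Tendsto (fun t : ℕ => ∫ ω, Z (1 / Real.sqrt t) t ω ∂μ) atTop (nhds 1) := by
    rw [tendsto_iff_norm_sub_tendsto_zero]
    refine squeeze_zero' (g := fun t : ℕ => Real.exp (K^2/2) * C * (1 / Real.sqrt t))
      (Eventually.of_forall fun _ => norm_nonneg _) ?_ ?_
    · filter_upwards [eventually_ge_atTop 1] with t ht
      obtain ⟨h1, h2, h3⟩ := hx t ht
      refine (step t _ h2 h3 h1.le t le_rfl).trans (le_of_eq ?_)
      calc _ = Real.exp (K^2/2) * C * (1 / Real.sqrt t) * ((1 / Real.sqrt t)^2 * t) := by ring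
        _ = _ := by rw [h1, mul_one]
    · simpa using hsq.const_mul (Real.exp (K^2/2) * C)
  set W : ℕ → Ω → ℂ := fun t ω => Complex.exp (Complex.I * (((∑ s ∈ range t, D s ω) / Real.sqrt t : ℝ) : ℂ)) with hW
  have hWm : ∀ t, Measurable (W t) := by
    intro t
    refine Complex.measurable_exp.comp ?_
    exact (Complex.measurable_ofReal.comp (((h.sum_meas t).mono (ℱ.le t) le_rfl).div_const _)).const_mul _
  have hWn : ∀ t ω, ‖W t ω‖ = 1 := by
    intro t ω
    rw [hW]
    simp only [Complex.norm_exp, Complex.I_mul_re, Complex.ofReal_im, neg_zero, Real.exp_zero]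
  have hZW : ∀ t : ℕ, 1 ≤ t → ∀ ω, Z (1 / Real.sqrt t) t ω =
      W t ω * Complex.exp ((((∑ s ∈ range t, D s ω ^ 2) / t / 2 : ℝ) : ℂ)) := by
    intro t ht ω
    have ht' : (1:ℝ) ≤ t := by exact_mod_cast ht
    rw [hZ, hW]
    simp only
    rw [← Complex.exp_add]
    congr 4
    · ring
    · rw [div_pow, Real.sq_sqrt (by positivity)]; ring
  have hWi : ∀ t, Integrable (W t) μ := fun t =>
    Integrable.of_bound (hWm t).aestronglyMeasurable 1 (ae_of_all _ fun ω => (hWn t ω).le)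
  have L2 : Tendsto (fun t : ℕ => ∫ ω, (Z (1 / Real.sqrt t) t ω - W t ω * Complex.exp ((σ/2 : ℝ) : ℂ)) ∂μ)
      atTop (nhds (∫ ω, (0:ℂ) ∂μ)) := by
    refine tendsto_integral_filter_of_dominated_convergence
      (fun _ => Real.exp (K^2/2) + Real.exp (σ/2)) ?_ ?_ (by simp) ?_
    · refine Eventually.of_forall fun t => ?_
      exact (((hZm _ t).mono (ℱ.le t) le_rfl).sub ((hWm t).mul_const _)).aestronglyMeasurable
    · filter_upwards [eventually_ge_atTop 1] with t ht
      obtain ⟨h1, h2, h3⟩ := hx t ht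
      filter_upwards [hZb t _ h1.le t le_rfl] with ω hω
      refine (norm_sub_le _ _).trans ?_
      rw [norm_mul, hWn, one_mul, Complex.norm_exp ((σ/2 : ℝ) : ℂ), Complex.ofReal_re]
      gcongr
    · filter_upwards [hσ] with ω hω
      rw [tendsto_zero_iff_norm_tendsto_zero]
      have h1 : Tendsto (fun t : ℕ => ‖Complex.exp ((((∑ s ∈ range t, D s ω ^ 2) / t / 2 : ℝ) : ℂ))
          - Complex.exp ((σ/2 : ℝ) : ℂ)‖) atTop (nhds 0) := by
        rw [← tendsto_iff_norm_sub_tendsto_zero]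
        exact (Complex.continuous_exp.comp Complex.continuous_ofReal).continuousAt.tendsto.comp
          (hω.div_const 2)
      refine h1.congr' ?_
      filter_upwards [eventually_ge_atTop 1] with t ht
      rw [hZW t ht, ← mul_sub, norm_mul, hWn, one_mul]
  have L3 : Tendsto (fun t : ℕ => (∫ ω, W t ω ∂μ) * Complex.exp ((σ/2 : ℝ) : ℂ)) atTop (nhds 1) := by
    have := L1.sub L2
    simp only [integral_zero, sub_zero] at this
    refine this.congr' ?_
    filter_upwards [eventually_ge_atTop 1] with t ht
    obtain ⟨h1, h2, h3⟩ := hx t ht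
    rw [integral_sub (hZi t _ h1.le t le_rfl) ((hWi t).mul_const _), integral_mul_const]
    ring
  have L4 := L3.mul_const (Complex.exp (-((σ/2 : ℝ) : ℂ)))
  rw [one_mul] at L4
  refine L4.congr fun t => ?_
  rw [mul_assoc, ← Complex.exp_add, add_neg_cancel, Complex.exp_zero, mul_one]

end MD

section QM
set_option linter.unusedSectionVars false

instance instBorelMat {k : ℕ} : BorelSpace (Matrix (Fin k) (Fin k) ℂ) :=
  inferInstanceAs (BorelSpace (Fin k → Fin k → ℂ))

/-- test functional -/
def fB {k : ℕ} (B σ : Matrix (Fin k) (Fin k) ℂ) : ℝ := ((σ * B).trace).re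

/-- outcome probability -/
def pr {k n : ℕ} (Mk : Fin n → Matrix (Fin k) (Fin k) ℂ) (i : Fin n)
    (σ : Matrix (Fin k) (Fin k) ℂ) : ℝ := ((Mk i * σ * (Mk i)ᴴ).trace).re

/-- state update -/
def Tu {k n : ℕ} (Mk : Fin n → Matrix (Fin k) (Fin k) ℂ) (i : Fin n)
    (σ : Matrix (Fin k) (Fin k) ℂ) : Matrix (Fin k) (Fin k) ℂ :=
  ((Mk i * σ * (Mk i)ᴴ).trace)⁻¹ • (Mk i * σ * (Mk i)ᴴ)

variable {k n : ℕ}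

lemma IsDensity.entry_le {σ : Matrix (Fin k) (Fin k) ℂ} (h : IsDensity σ) (i j : Fin k) :
    ‖σ i j‖ ≤ 1 := by
  have hd : ∀ i, 0 ≤ (σ i i).re ∧ (σ i i).im = 0 := fun i => by
    have := Complex.nonneg_iff.1 (h.1.diag_nonneg (i := i))
    exact ⟨this.1, this.2.symm⟩
  have hs : ∑ i, (σ i i).re = 1 := by
    have := congrArg Complex.re h.2
    simpa [Matrix.trace] using this
  have hle : ∀ i, (σ i i).re ≤ 1 := fun i => by
    rw [← hs]
    exact single_le_sum (f := fun i => (σ i i).re) (fun i _ => (hd i).1) (mem_univ i)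
  have hdet := (h.1.submatrix ![i, j]).det_nonneg
  rw [det_fin_two] at hdet
  simp only [submatrix_apply, cons_val_zero, cons_val_one] at hdet
  have hji : σ j i = star (σ i j) := (h.1.1.apply j i).symm
  have := (Complex.nonneg_iff.1 hdet).1
  rw [hji] at this
  simp only [Complex.star_def, Complex.sub_re, Complex.mul_re, (hd i).2, Complex.conj_re,
    Complex.conj_im] at this
  have h1 := hle i
  have h2 := hle j
  have h3 : ‖σ i j‖^2 ≤ 1 := by
    rw [← Complex.normSq_eq_norm_sq, Complex.normSq_apply]
    nlinarith [(hd i).1, (hd j).1]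
  nlinarith [norm_nonneg (σ i j)]

lemma isClosed_density : IsClosed {σ : Matrix (Fin k) (Fin k) ℂ | IsDensity σ} := by
  have : {σ : Matrix (Fin k) (Fin k) ℂ | IsDensity σ} =
      ({σ | σᴴ = σ} ∩ ⋂ x : Fin k → ℂ, {σ | 0 ≤ (star x ⬝ᵥ σ *ᵥ x).re ∧ 0 = (star x ⬝ᵥ σ *ᵥ x).im}) ∩
      {σ | σ.trace = 1} := by
    ext σ
    simp [IsDensity, posSemidef_iff_dotProduct_mulVec, IsHermitian, Complex.nonneg_iff]
  rw [this]
  refine (IsClosed.inter ?_ (isClosed_iInter fun x => ?_)).inter ?_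
  · exact isClosed_eq (by fun_prop) (by fun_prop)
  · have hc : Continuous fun σ : Matrix (Fin k) (Fin k) ℂ => star x ⬝ᵥ σ *ᵥ x := by fun_prop
    exact (isClosed_le continuous_const (Complex.continuous_re.comp hc)).inter
      (isClosed_eq continuous_const (Complex.continuous_im.comp hc))
  · exact isClosed_eq (by fun_prop) (by fun_prop)

lemma isCompact_density : IsCompact {σ : Matrix (Fin k) (Fin k) ℂ | IsDensity σ} := by
  have hc : IsCompact (Set.pi Set.univ fun _ : Fin k => Set.pi Set.univ fun _ : Fin k =>
      Metric.closedBall (0:ℂ) 1) :=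
    isCompact_univ_pi fun _ => isCompact_univ_pi fun _ => isCompact_closedBall _ _
  refine IsCompact.of_isClosed_subset hc isClosed_density ?_
  intro σ hσ i _ j _
  simpa using IsDensity.entry_le hσ i j

lemma fB_bound (B : Matrix (Fin k) (Fin k) ℂ) {σ : Matrix (Fin k) (Fin k) ℂ} (h : IsDensity σ) :
    |fB B σ| ≤ ∑ i, ∑ j, ‖B j i‖ := by
  refine (Complex.abs_re_le_norm _).trans ?_
  simp only [trace, Matrix.diag, mul_apply]
  refine (norm_sum_le _ _).trans (sum_le_sum fun i _ => (norm_sum_le _ _).trans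
    (sum_le_sum fun j _ => ?_))
  rw [norm_mul]
  have := h.entry_le i j
  nlinarith [norm_nonneg (B j i)]

variable (Mk : Fin n → Matrix (Fin k) (Fin k) ℂ)

lemma pr_tr (i : Fin n) {σ : Matrix (Fin k) (Fin k) ℂ} (h : IsDensity σ) :
    0 ≤ pr Mk i σ ∧ (Mk i * σ * (Mk i)ᴴ).trace = (pr Mk i σ : ℂ) := by
  have := Complex.nonneg_iff.1 (h.1.mul_mul_conjTranspose_same (Mk i)).trace_nonneg
  refine ⟨this.1, Complex.ext rfl ?_⟩
  rw [← this.2]; simp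

lemma pr_eq_fB (i : Fin n) (σ : Matrix (Fin k) (Fin k) ℂ) :
    pr Mk i σ = fB ((Mk i)ᴴ * Mk i) σ := by
  unfold pr fB
  rw [Matrix.mul_assoc, trace_mul_comm, Matrix.mul_assoc]

lemma fB_conj (i : Fin n) (B σ : Matrix (Fin k) (Fin k) ℂ) :
    fB B (Mk i * σ * (Mk i)ᴴ) = fB ((Mk i)ᴴ * B * Mk i) σ := by
  unfold fB
  rw [Matrix.mul_assoc, Matrix.mul_assoc, trace_mul_comm]
  simp only [Matrix.mul_assoc]

lemma fB_add (B σ τ : Matrix (Fin k) (Fin k) ℂ) : fB B (σ + τ) = fB B σ + fB B τ := by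
  simp [fB, Matrix.add_mul]

lemma fB_sub (B σ τ : Matrix (Fin k) (Fin k) ℂ) : fB B (σ - τ) = fB B σ - fB B τ := by
  simp [fB, Matrix.sub_mul]

lemma fB_sum {ι : Type} (s : Finset ι) (B : Matrix (Fin k) (Fin k) ℂ)
    (σ : ι → Matrix (Fin k) (Fin k) ℂ) : fB B (∑ i ∈ s, σ i) = ∑ i ∈ s, fB B (σ i) := by
  simp [fB, Finset.sum_mul, trace_sum]

lemma fB_smul (c : ℝ) (B σ : Matrix (Fin k) (Fin k) ℂ) : fB B (c • σ) = c * fB B σ := by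
  simp [fB]

lemma fB_sum_left {ι : Type} (s : Finset ι) (B : ι → Matrix (Fin k) (Fin k) ℂ)
    (σ : Matrix (Fin k) (Fin k) ℂ) : fB (∑ i ∈ s, B i) σ = ∑ i ∈ s, fB (B i) σ := by
  simp [fB, Finset.mul_sum, trace_sum]

lemma fB_sub_left (A B σ : Matrix (Fin k) (Fin k) ℂ) : fB (A - B) σ = fB A σ - fB B σ := by
  simp [fB, Matrix.mul_sub]

lemma fB_smul_left (c : ℝ) (B σ : Matrix (Fin k) (Fin k) ℂ) : fB (c • B) σ = c * fB B σ := by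
  simp [fB]

lemma fB_one {σ : Matrix (Fin k) (Fin k) ℂ} (h : IsDensity σ) : fB 1 σ = 1 := by
  simp [fB, h.2]

lemma fB_cont (B : Matrix (Fin k) (Fin k) ℂ) : Continuous (fB B) := by
  unfold fB; fun_prop

lemma fB_meas (B : Matrix (Fin k) (Fin k) ℂ) : Measurable (fB B) := (fB_cont B).measurable

lemma pr_meas (i : Fin n) : Measurable (pr Mk i) := by
  have : pr Mk i = fB ((Mk i)ᴴ * Mk i) := funext fun σ => pr_eq_fB Mk i σ
  rw [this]; exact fB_meas _

lemma fB_Tu_meas (i : Fin n) (B : Matrix (Fin k) (Fin k) ℂ) :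
    Measurable (fun σ => fB B (Tu Mk i σ)) := by
  have h1 : Continuous (fun σ : Matrix (Fin k) (Fin k) ℂ => (Mk i * σ * (Mk i)ᴴ).trace) :=
    ((continuous_const.matrix_mul continuous_id).matrix_mul continuous_const).matrix_trace
  have h2 : Continuous (fun σ : Matrix (Fin k) (Fin k) ℂ => (Mk i * σ * (Mk i)ᴴ * B).trace) :=
    (((continuous_const.matrix_mul continuous_id).matrix_mul continuous_const).matrix_mul
      continuous_const).matrix_trace
  have : (fun σ => fB B (Tu Mk i σ)) = fun σ => (((Mk i * σ * (Mk i)ᴴ).trace)⁻¹ *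
      (Mk i * σ * (Mk i)ᴴ * B).trace).re := by
    ext σ; simp only [fB, Tu, Matrix.smul_mul, trace_smul, smul_eq_mul]
  rw [this]
  exact Complex.measurable_re.comp (h1.measurable.inv.mul h2.measurable)

lemma Tu_density (i : Fin n) {σ : Matrix (Fin k) (Fin k) ℂ} (h : IsDensity σ) :
    IsDensity (Tu Mk i σ) ∨ Tu Mk i σ = 0 := by
  obtain ⟨h0, h1⟩ := pr_tr Mk i h
  by_cases hp : (Mk i * σ * (Mk i)ᴴ).trace = 0
  · right; simp [Tu, hp]
  · left
    refine ⟨?_, ?_⟩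
    · refine (h.1.mul_mul_conjTranspose_same (Mk i)).smul ?_
      rw [h1, ← Complex.ofReal_inv]
      exact_mod_cast inv_nonneg.2 h0
    · simp [Tu, hp]

lemma fB_Tu_bound (i : Fin n) (B : Matrix (Fin k) (Fin k) ℂ) {σ : Matrix (Fin k) (Fin k) ℂ}
    (h : IsDensity σ) : |fB B (Tu Mk i σ)| ≤ ∑ i, ∑ j, ‖B j i‖ := by
  rcases Tu_density Mk i h with h1 | h1
  · exact fB_bound B h1
  · rw [h1]; simp only [fB, Matrix.zero_mul, trace_zero, Complex.zero_re, abs_zero]; positivity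

lemma pr_mul_fB (i : Fin n) (B : Matrix (Fin k) (Fin k) ℂ) {σ : Matrix (Fin k) (Fin k) ℂ}
    (h : IsDensity σ) : pr Mk i σ * fB B (Tu Mk i σ) = fB B (Mk i * σ * (Mk i)ᴴ) := by
  obtain ⟨h0, h1⟩ := pr_tr Mk i h
  by_cases hp : (Mk i * σ * (Mk i)ᴴ).trace = 0
  · have := (h.1.mul_mul_conjTranspose_same (Mk i)).trace_eq_zero_iff.1 hp
    rw [Tu, this]; simp [fB]
  · rw [← fB_smul]
    congr 1
    have hp' : (pr Mk i σ : ℂ) ≠ 0 := by rw [← h1]; exact hp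
    rw [Tu, h1]
    ext a b
    simp only [Matrix.smul_apply, Complex.real_smul, smul_eq_mul]
    field_simp

lemma pr_sum (hMk : ∑ i, (Mk i)ᴴ * Mk i = 1) {σ : Matrix (Fin k) (Fin k) ℂ} (h : IsDensity σ) :
    ∑ i, pr Mk i σ = 1 := by
  simp_rw [pr_eq_fB]
  rw [← fB_sum_left, hMk, fB_one h]

variable {Mk} {Ω : Type} {mΩ : MeasurableSpace Ω} {μ : Measure Ω} [IsProbabilityMeasure μ]
  {ℱ : Filtration ℕ mΩ} {ρ : ℕ → Ω → Matrix (Fin k) (Fin k) ℂ} {Y : ℕ → Ω → Fin n}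

lemma IsMeasTraj.good (hQT : IsMeasTraj Mk μ ℱ ρ Y) :
    ∀ᵐ ω ∂μ, ∀ s, IsDensity (ρ s ω) ∧ ρ (s + 1) ω = Tu Mk (Y (s + 1) ω) (ρ s ω) := by
  have h1 := ae_all_iff.2 hQT.density
  have h2 : ∀ᵐ ω ∂μ, ∀ s i, Y (s + 1) ω = i →
      ρ (s + 1) ω = ((Mk i * ρ s ω * (Mk i)ᴴ).trace)⁻¹ • (Mk i * ρ s ω * (Mk i)ᴴ) :=
    ae_all_iff.2 fun s => ae_all_iff.2 fun i => hQT.update s i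
  filter_upwards [h1, h2] with ω a b s
  exact ⟨a s, b s _ rfl⟩

lemma IsMeasTraj.ind_meas (hQT : IsMeasTraj Mk μ ℱ ρ Y) (s : ℕ) (i : Fin n) :
    Measurable[ℱ s] (fun ω => if Y s ω = i then (1:ℝ) else 0) :=
  Measurable.ite ((hQT.adapted_Y s) (measurableSet_singleton i)) measurable_const measurable_const

lemma IsMeasTraj.pull (hQT : IsMeasTraj Mk μ ℱ ρ Y) (s : ℕ) (i : Fin n) (Z : Ω → ℝ)
    (hZ : Measurable[ℱ s] Z) (C : ℝ) (hC : ∀ᵐ ω ∂μ, |Z ω| ≤ C) :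
    ∫ ω, Z ω * (if Y (s + 1) ω = i then (1:ℝ) else 0) ∂μ = ∫ ω, Z ω * pr Mk i (ρ s ω) ∂μ := by
  have hi : Integrable (fun ω => if Y (s + 1) ω = i then (1:ℝ) else 0) μ :=
    integrable_of_abs_le ((hQT.ind_meas (s+1) i).mono (ℱ.le _) le_rfl) 1
      (ae_of_all _ fun ω => by split_ifs <;> simp)
  have h1 := condExp_stronglyMeasurable_mul_of_bound (ℱ.le s) hZ.stronglyMeasurable hi C
    (by simpa using hC)
  have h2 := integral_condExp (μ := μ) (ℱ.le s) (f := Z * fun ω => if Y (s + 1) ω = i then (1:ℝ) else 0)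
  have h3 : ∫ ω, Z ω * (if Y (s + 1) ω = i then (1:ℝ) else 0) ∂μ =
    ∫ ω, (Z * fun ω => if Y (s + 1) ω = i then (1:ℝ) else 0) ω ∂μ := rfl
  rw [h3, ← h2]
  refine integral_congr_ae ?_
  filter_upwards [h1, hQT.prob s i] with ω a b
  rw [a, Pi.mul_apply, b]; rfl

/-- the martingale difference attached to `w` -/
def MDw (Mk : Fin n → Matrix (Fin k) (Fin k) ℂ) (ρ : ℕ → Ω → Matrix (Fin k) (Fin k) ℂ)
    (Y : ℕ → Ω → Fin n) (w : Fin n → Matrix (Fin k) (Fin k) ℂ → ℝ) (s : ℕ) (ω : Ω) : ℝ :=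
  w (Y (s + 1) ω) (ρ s ω) - ∑ i, pr Mk i (ρ s ω) * w i (ρ s ω)

lemma MDw_eq (w : Fin n → Matrix (Fin k) (Fin k) ℂ → ℝ) (s : ℕ) (ω : Ω) :
    MDw Mk ρ Y w s ω = ∑ i, w i (ρ s ω) *
      ((if Y (s + 1) ω = i then (1:ℝ) else 0) - pr Mk i (ρ s ω)) := by
  simp only [mul_sub, sum_sub_distrib, mul_ite, mul_one, mul_zero, Finset.sum_ite_eq, mem_univ,
    if_true, MDw]
  congr 1
  exact sum_congr rfl fun i _ => mul_comm _ _

lemma IsMeasTraj.md (hMk : ∑ i, (Mk i)ᴴ * Mk i = 1) (hQT : IsMeasTraj Mk μ ℱ ρ Y)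
    (w : Fin n → Matrix (Fin k) (Fin k) ℂ → ℝ) (hw : ∀ i, Measurable (w i)) (K : ℝ)
    (hK : ∀ i σ, IsDensity σ → |w i σ| ≤ K) :
    IsMD μ ℱ (MDw Mk ρ Y w) (2 * K) := by
  have hwm : ∀ s i, Measurable[ℱ s] (fun ω => w i (ρ s ω)) := fun s i =>
    (hw i).comp (hQT.adapted_ρ s)
  have hpm : ∀ s i, Measurable[ℱ s] (fun ω => pr Mk i (ρ s ω)) := fun s i =>
    (pr_meas Mk i).comp (hQT.adapted_ρ s)
  refine ⟨fun s => ?_, fun s => ?_, fun s Z hZ hC => ?_⟩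
  · have : MDw Mk ρ Y w s = fun ω => ∑ i, w i (ρ s ω) *
      ((if Y (s + 1) ω = i then (1:ℝ) else 0) - pr Mk i (ρ s ω)) := funext fun ω => MDw_eq w s ω
    rw [this]
    refine Finset.measurable_fun_sum _ fun i _ => ?_
    have hle := ℱ.mono (Nat.le_succ s)
    exact ((hwm s i).mono hle le_rfl).mul ((hQT.ind_meas (s+1) i).sub ((hpm s i).mono hle le_rfl))
  · filter_upwards [hQT.density s] with ω hd
    have h1 := hK (Y (s+1) ω) _ hd
    have h2 : |∑ i, pr Mk i (ρ s ω) * w i (ρ s ω)| ≤ K := by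
      calc _ ≤ ∑ i, |pr Mk i (ρ s ω) * w i (ρ s ω)| := abs_sum_le_sum_abs _ _
        _ ≤ ∑ i, pr Mk i (ρ s ω) * K := by
          refine sum_le_sum fun i _ => ?_
          have h0 := (pr_tr Mk i hd).1
          rw [abs_mul, abs_of_nonneg h0]
          exact mul_le_mul_of_nonneg_left (hK i _ hd) h0
        _ = K := by rw [← sum_mul, pr_sum Mk hMk hd, one_mul]
    unfold MDw
    refine (abs_sub _ _).trans ?_
    linarith
  · obtain ⟨C, hC⟩ := hC
    have hg : ∀ i, Measurable[ℱ s] (fun ω => Z ω * w i (ρ s ω)) := fun i => hZ.mul (hwm s i)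
    have hb : ∀ i, ∀ᵐ ω ∂μ, |Z ω * w i (ρ s ω)| ≤ C * K := by
      intro i
      filter_upwards [hC, hQT.density s] with ω h1 h2
      rw [abs_mul]
      have h3 := hK i _ h2
      have := (abs_nonneg _).trans h1
      gcongr
    have hp : ∀ i, ∀ᵐ ω ∂μ, |pr Mk i (ρ s ω)| ≤ 1 := by
      intro i
      filter_upwards [hQT.density s] with ω h2
      rw [abs_of_nonneg (pr_tr Mk i h2).1, ← pr_sum Mk hMk h2]
      exact single_le_sum (f := fun i => pr Mk i (ρ s ω)) (fun i _ => (pr_tr Mk i h2).1) (mem_univ i)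
    have i0 : ∀ i, Integrable (fun ω => Z ω * w i (ρ s ω)) μ := fun i =>
      integrable_of_abs_le ((hg i).mono (ℱ.le s) le_rfl) _ (hb i)
    have i1 : ∀ i, Integrable (fun ω => Z ω * w i (ρ s ω) *
        (if Y (s + 1) ω = i then (1:ℝ) else 0)) μ := fun i =>
      (i0 i).mul_bdd (c := 1) ((hQT.ind_meas (s+1) i).mono (ℱ.le _) le_rfl).aestronglyMeasurable
        (ae_of_all _ fun ω => by split_ifs <;> simp)
    have i2 : ∀ i, Integrable (fun ω => Z ω * w i (ρ s ω) * pr Mk i (ρ s ω)) μ := fun i =>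
      (i0 i).mul_bdd (c := 1) ((hpm s i).mono (ℱ.le _) le_rfl).aestronglyMeasurable
        (by simpa using hp i)
    have e : ∀ ω, Z ω * MDw Mk ρ Y w s ω = ∑ i, (Z ω * w i (ρ s ω) *
        (if Y (s + 1) ω = i then (1:ℝ) else 0) - Z ω * w i (ρ s ω) * pr Mk i (ρ s ω)) := by
      intro ω
      rw [MDw_eq, mul_sum]
      exact sum_congr rfl fun i _ => by ring
    simp_rw [e]
    have i4 : ∀ i, Integrable (fun ω => Z ω * w i (ρ s ω) *
        (if Y (s + 1) ω = i then (1:ℝ) else 0) - Z ω * w i (ρ s ω) * pr Mk i (ρ s ω)) μ :=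
      fun i => (i1 i).sub (i2 i)
    rw [integral_finsetSum _ fun i _ => i4 i]
    refine sum_eq_zero fun i _ => ?_
    rw [integral_sub (i1 i) (i2 i), hQT.pull s i _ (hg i) _ (hb i), sub_self]

lemma tele_div (u : ℕ → ℝ) (C : ℝ) (hC : ∀ t, |u t| ≤ C) :
    Tendsto (fun t : ℕ => (∑ s ∈ range t, (u (s + 1) - u s)) / t) atTop (nhds 0) := by
  simp_rw [Finset.sum_range_sub]
  refine squeeze_zero_norm (a := fun t : ℕ => (2 * C) / t) (fun t => ?_) (tendsto_const_div_atTop_nhds_zero_nat _)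
  rw [norm_div, Real.norm_eq_abs, Real.norm_natCast]
  gcongr
  have h1 := hC t
  have h2 := hC 0
  refine (abs_sub _ _).trans ?_
  linarith

lemma IsMeasTraj.ergodic (hMk : ∑ i, (Mk i)ᴴ * Mk i = 1)
    (ρinf : Matrix (Fin k) (Fin k) ℂ)
    (huniq : ∀ σ, IsDensity σ → (∑ i, Mk i * σ * (Mk i)ᴴ) = σ → σ = ρinf)
    (hQT : IsMeasTraj Mk μ ℱ ρ Y) :
    ∀ᵐ ω ∂μ, ∀ B, Tendsto (fun t : ℕ => (∑ s ∈ range t, fB B (ρ s ω)) / t) atTop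
      (nhds (fB B ρinf)) := by
  have hS : ∀ B : Matrix (Fin k) (Fin k) ℂ, ∀ᵐ ω ∂μ, Tendsto (fun t : ℕ =>
      (∑ s ∈ range t, MDw Mk ρ Y (fun i σ => fB B (Tu Mk i σ)) s ω) / t) atTop (nhds 0) := fun B =>
    (hQT.md hMk _ (fun i => fB_Tu_meas Mk i B) _ (fun i σ h => fB_Tu_bound Mk i B h)).slln
  have hS' : ∀ᵐ ω ∂μ, ∀ (a b : Fin k) (c : Bool), Tendsto (fun t : ℕ =>
      (∑ s ∈ range t, MDw Mk ρ Y (fun i σ => fB (single b a (if c then 1 else -Complex.I)) (Tu Mk i σ)) s ω) / t)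
      atTop (nhds 0) :=
    ae_all_iff.2 fun a => ae_all_iff.2 fun b => ae_all_iff.2 fun c => hS _
  filter_upwards [hS', hQT.good] with ω h1 h2
  have hA : Tendsto (fun t : ℕ => ((t:ℝ)⁻¹) • ∑ s ∈ range t, ρ s ω) atTop (nhds ρinf) := by
    refine isCompact_density.tendsto_nhds_of_unique_mapClusterPt ?_ ?_
    · filter_upwards [eventually_ge_atTop 1] with t ht
      have ht' : (0:ℝ) < t := by exact_mod_cast ht
      refine ⟨?_, ?_⟩
      · refine PosSemidef.smul (posSemidef_sum _ fun s _ => (h2 s).1.1) (by positivity)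
      · rw [trace_smul, trace_sum, sum_congr rfl fun s _ => (h2 s).1.2]
        simp only [sum_const, card_range, nsmul_eq_mul, mul_one, Complex.real_smul]
        push_cast
        have : (t:ℂ) ≠ 0 := by exact_mod_cast ht'.ne'
        field_simp
    · intro a ha hcl
      refine huniq a ha ?_
      have key : ∀ (i j : Fin k) (c : Bool),
          fB (single j i (if c then 1 else -Complex.I)) ((∑ i, Mk i * a * (Mk i)ᴴ) - a) = 0 := by
        intro i j c
        set B := (single j i (if c then 1 else -Complex.I) : Matrix (Fin k) (Fin k) ℂ) with hB
        have hcont : Continuous (fun σ : Matrix (Fin k) (Fin k) ℂ =>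
            fB B ((∑ i, Mk i * σ * (Mk i)ᴴ) - σ)) := (fB_cont B).comp (by fun_prop)
        have hc2 := hcl.continuousAt_comp hcont.continuousAt
        have hlim : Tendsto ((fun σ : Matrix (Fin k) (Fin k) ℂ =>
            fB B ((∑ i, Mk i * σ * (Mk i)ᴴ) - σ)) ∘
              (fun t : ℕ => ((t:ℝ)⁻¹) • ∑ s ∈ range t, ρ s ω)) atTop (nhds 0) := by
          have t1 : Tendsto (fun t : ℕ => (∑ s ∈ range t,
              MDw Mk ρ Y (fun i σ => fB B (Tu Mk i σ)) s ω) / t) atTop (nhds 0) := h1 i j c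
          have t2 := tele_div (fun s => fB B (ρ s ω)) _ (fun t => fB_bound B (h2 t).1)
          have t3 := t2.sub t1
          rw [sub_zero] at t3
          refine t3.congr fun t => ?_
          rw [← sub_div, ← sum_sub_distrib]
          have e1 : ∀ s, (fB B (ρ (s+1) ω) - fB B (ρ s ω)) -
              MDw Mk ρ Y (fun i σ => fB B (Tu Mk i σ)) s ω =
              fB B ((∑ i, Mk i * ρ s ω * (Mk i)ᴴ) - ρ s ω) := by
            intro s
            rw [fB_sub, fB_sum, MDw, (h2 s).2]
            simp_rw [pr_mul_fB Mk _ B (h2 s).1]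
            ring
          rw [Finset.sum_congr rfl fun s _ => e1 s]
          simp only [Function.comp]
          rw [← fB_sum, div_eq_inv_mul, ← fB_smul]
          congr 1
          simp only [sum_sub_distrib, smul_sub, Matrix.mul_smul, Matrix.smul_mul, Matrix.mul_sum,
            Matrix.sum_mul, Finset.smul_sum]
          rw [sum_comm]
        have : (nhds (fB B ((∑ i, Mk i * a * (Mk i)ᴴ) - a)) ⊓ nhds 0).NeBot :=
          ClusterPt.mono hc2 hlim
        exact eq_of_nhds_neBot this
      rw [← sub_eq_zero]
      ext i j
      have k1 := key i j true
      have k2 := key i j false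
      simp only [fB, trace_mul_single, if_true, MulOpposite.smul_eq_mul_unop, MulOpposite.unop_op,
        mul_one, Bool.false_eq_true, if_false] at k1 k2
      refine Complex.ext k1 ?_
      simpa using k2
  intro B
  refine ((fB_cont B).continuousAt.tendsto.comp hA).congr fun t => ?_
  simp only [Function.comp]
  rw [fB_smul, fB_sum, div_eq_inv_mul]

end QM


section Fin3
set_option linter.unusedSectionVars false
variable {k n : ℕ} {Ω : Type} {mΩ : MeasurableSpace Ω} {μ : Measure Ω} [IsProbabilityMeasure μ]
  {ℱ : Filtration ℕ mΩ} {Mk : Fin n → Matrix (Fin k) (Fin k) ℂ}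
  {ρ : ℕ → Ω → Matrix (Fin k) (Fin k) ℂ} {Y : ℕ → Ω → Fin n}

/-- centered coefficients -/
def alp (m l : Fin n → ℝ) (i : Fin n) : ℝ := l i - ∑ j, l j * m j

/-- corrector observable -/
def Aob (LL : Fin n → Matrix (Fin k) (Fin k) ℂ) (l : Fin n → ℝ) : Matrix (Fin k) (Fin k) ℂ :=
  ∑ i, l i • LL i

/-- martingale weights -/
def WW (Mk : Fin n → Matrix (Fin k) (Fin k) ℂ) (a : Fin n → ℝ) (A : Matrix (Fin k) (Fin k) ℂ)
    (i : Fin n) (σ : Matrix (Fin k) (Fin k) ℂ) : ℝ := a i + fB A (Tu Mk i σ) - fB A σ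

lemma fB_Aob (LL : Fin n → Matrix (Fin k) (Fin k) ℂ) (l : Fin n → ℝ)
    (σ : Matrix (Fin k) (Fin k) ℂ) : fB (Aob LL l) σ = ∑ i, l i * fB (LL i) σ := by
  unfold Aob
  rw [fB_sum_left]
  exact sum_congr rfl fun i _ => fB_smul_left _ _ _

lemma comp0 (hMk : ∑ i, (Mk i)ᴴ * Mk i = 1) {LL : Fin n → Matrix (Fin k) (Fin k) ℂ}
    {m : Fin n → ℝ}
    (hLL : ∀ i : Fin n, LL i - (∑ j, (Mk j)ᴴ * LL i * Mk j) =
        (Mk i)ᴴ * Mk i - m i • (1 : Matrix (Fin k) (Fin k) ℂ)) (l : Fin n → ℝ)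
    {σ : Matrix (Fin k) (Fin k) ℂ} (h : IsDensity σ) :
    ∑ i, pr Mk i σ * WW Mk (alp m l) (Aob LL l) i σ = 0 := by
  have h1 : ∀ i, fB (LL i) σ - ∑ j, fB (LL i) (Mk j * σ * (Mk j)ᴴ) = pr Mk i σ - m i := by
    intro i
    have := congrArg (fun B => fB B σ) (hLL i)
    simp only [fB_sub_left, fB_sum_left, fB_smul_left, fB_one h, ← pr_eq_fB, ← fB_conj] at this
    linarith
  have h2 : ∑ i, pr Mk i σ * WW Mk (alp m l) (Aob LL l) i σ
      = (∑ i, pr Mk i σ * l i) - (∑ j, l j * m j) * (∑ i, pr Mk i σ)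
        + (∑ i, fB (Aob LL l) (Mk i * σ * (Mk i)ᴴ)) - fB (Aob LL l) σ * (∑ i, pr Mk i σ) := by
    rw [mul_sum, mul_sum, ← sum_sub_distrib, ← sum_add_distrib, ← sum_sub_distrib]
    refine sum_congr rfl fun i _ => ?_
    rw [← pr_mul_fB Mk i _ h]
    unfold WW alp
    ring
  rw [h2, pr_sum Mk hMk h]
  simp only [fB_Aob]
  rw [sum_comm]
  have h3 : ∑ i, l i * (fB (LL i) σ - ∑ j, fB (LL i) (Mk j * σ * (Mk j)ᴴ))
    = ∑ i, l i * (pr Mk i σ - m i) := sum_congr rfl fun i _ => by rw [h1]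
  simp only [mul_sub, sum_sub_distrib, mul_sum] at h3
  have h4 : ∑ i, pr Mk i σ * l i = ∑ i, l i * pr Mk i σ := sum_congr rfl fun i _ => mul_comm _ _
  rw [h4]
  linarith

lemma WW_meas (a : Fin n → ℝ) (A : Matrix (Fin k) (Fin k) ℂ) (i : Fin n) :
    Measurable (WW Mk a A i) :=
  ((fB_Tu_meas Mk i A).const_add (a i)).sub (fB_meas A)

lemma abs_le_sum_abs (a : Fin n → ℝ) (i : Fin n) : |a i| ≤ ∑ j, |a j| :=
  single_le_sum (f := fun j => |a j|) (fun _ _ => abs_nonneg _) (mem_univ i)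

/-- crude bound -/
def bdA (A : Matrix (Fin k) (Fin k) ℂ) : ℝ := ∑ i, ∑ j, ‖A j i‖

lemma bdA_nonneg (A : Matrix (Fin k) (Fin k) ℂ) : 0 ≤ bdA A :=
  sum_nonneg fun _ _ => sum_nonneg fun _ _ => norm_nonneg _

lemma WW_bound (a : Fin n → ℝ) (A : Matrix (Fin k) (Fin k) ℂ) (i : Fin n)
    {σ : Matrix (Fin k) (Fin k) ℂ} (h : IsDensity σ) :
    |WW Mk a A i σ| ≤ (∑ j, |a j|) + 2 * bdA A := by
  have h1 := abs_le.1 (abs_le_sum_abs a i)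
  have h2 : |fB A (Tu Mk i σ)| ≤ bdA A := fB_Tu_bound Mk i A h
  have h3 : |fB A σ| ≤ bdA A := fB_bound A h
  rw [abs_le] at *
  unfold WW
  constructor <;> linarith

lemma qv (hMk : ∑ i, (Mk i)ᴴ * Mk i = 1) {ρinf : Matrix (Fin k) (Fin k) ℂ}
    (huniq : ∀ σ, IsDensity σ → (∑ i, Mk i * σ * (Mk i)ᴴ) = σ → σ = ρinf)
    (hQT : IsMeasTraj Mk μ ℱ ρ Y) (a : Fin n → ℝ) (A : Matrix (Fin k) (Fin k) ℂ)
    (h0 : ∀ σ, IsDensity σ → ∑ i, pr Mk i σ * WW Mk a A i σ = 0) :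
    ∀ᵐ ω ∂μ, Tendsto (fun t : ℕ => (∑ s ∈ range t, MDw Mk ρ Y (WW Mk a A) s ω ^ 2) / t) atTop
      (nhds (∑ i, (a i ^ 2 * pr Mk i ρinf + 2 * a i * fB A (Mk i * ρinf * (Mk i)ᴴ)))) := by
  set w1 : Fin n → Matrix (Fin k) (Fin k) ℂ → ℝ := fun i σ => a i ^ 2 + 2 * a i * fB A (Tu Mk i σ)
    with hw1
  set w2 : Fin n → Matrix (Fin k) (Fin k) ℂ → ℝ := fun i σ => fB A σ * WW Mk a A i σ with hw2
  have e1 : ∀ᵐ ω ∂μ, Tendsto (fun t : ℕ => (∑ s ∈ range t, MDw Mk ρ Y w1 s ω) / t) atTop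
      (nhds 0) := by
    refine (hQT.md hMk w1 (fun i => ((fB_Tu_meas Mk i A).const_mul _).const_add _)
      ((∑ j, |a j|) ^ 2 + 2 * (∑ j, |a j|) * bdA A) ?_).slln
    intro i σ h
    have h1 := abs_le_sum_abs a i
    have h2 : |fB A (Tu Mk i σ)| ≤ bdA A := fB_Tu_bound Mk i A h
    calc |w1 i σ| ≤ |a i ^ 2| + |2 * a i * fB A (Tu Mk i σ)| := abs_add_le _ _
      _ = |a i| ^ 2 + 2 * |a i| * |fB A (Tu Mk i σ)| := by simp [abs_mul]
      _ ≤ _ := by gcongr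
  have e2 : ∀ᵐ ω ∂μ, Tendsto (fun t : ℕ => (∑ s ∈ range t, MDw Mk ρ Y w2 s ω) / t) atTop
      (nhds 0) := by
    refine (hQT.md hMk w2 (fun i => (fB_meas A).mul (WW_meas a A i))
      (bdA A * ((∑ j, |a j|) + 2 * bdA A)) ?_).slln
    intro i σ h
    have h3 : |fB A σ| ≤ bdA A := fB_bound A h
    have h4 := WW_bound (Mk := Mk) a A i h
    have := bdA_nonneg A
    calc |w2 i σ| = |fB A σ| * |WW Mk a A i σ| := abs_mul _ _
      _ ≤ _ := by gcongr
  filter_upwards [e1, e2, hQT.good, hQT.ergodic hMk ρinf huniq] with ω e1 e2 hg he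
  set Bq : Matrix (Fin k) (Fin k) ℂ :=
    ∑ i, (a i ^ 2 • ((Mk i)ᴴ * Mk i) - (-(2 * a i)) • ((Mk i)ᴴ * A * Mk i)) with hBq
  have hB : ∀ σ, fB Bq σ = ∑ i, (a i ^ 2 * pr Mk i σ + 2 * a i * fB A (Mk i * σ * (Mk i)ᴴ)) := by
    intro σ
    rw [hBq, fB_sum_left]
    refine sum_congr rfl fun i _ => ?_
    rw [fB_sub_left, fB_smul_left, fB_smul_left, ← pr_eq_fB, ← fB_conj]
    ring
  have hC : ∀ σ, IsDensity σ → ∑ i, pr Mk i σ * w1 i σ = fB Bq σ := by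
    intro σ h
    rw [hB]
    refine sum_congr rfl fun i _ => ?_
    rw [← pr_mul_fB Mk i A h, hw1]
    ring
  have e3 := tele_div (fun s => fB A (ρ s ω) ^ 2) (bdA A ^ 2) (fun s => by
    have h3 : |fB A (ρ s ω)| ≤ bdA A := fB_bound A (hg s).1
    rw [abs_pow]; gcongr)
  have e4 := ((he Bq).add (e1.add e3)).sub (e2.const_mul 2)
  rw [hB] at e4
  simp only [add_zero, mul_zero, sub_zero] at e4
  refine e4.congr fun t => ?_
  rw [← add_div, ← add_div, ← mul_div_assoc, ← sub_div, mul_sum, ← sum_add_distrib,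
    ← sum_add_distrib, ← sum_sub_distrib]
  congr 1
  refine sum_congr rfl fun s _ => ?_
  have hd := (hg s).1
  have z2 : ∑ i, pr Mk i (ρ s ω) * w2 i (ρ s ω) = 0 := by
    have : ∑ i, pr Mk i (ρ s ω) * w2 i (ρ s ω)
        = fB A (ρ s ω) * ∑ i, pr Mk i (ρ s ω) * WW Mk a A i (ρ s ω) := by
      rw [mul_sum]
      exact sum_congr rfl fun i _ => by rw [hw2]; ring
    rw [this, h0 _ hd, mul_zero]
  unfold MDw
  rw [z2, h0 _ hd, hC _ hd, (hg s).2]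
  simp only [hw1, hw2, WW]
  ring

end Fin3

section Fin4
set_option linter.unusedSectionVars false
variable {k n : ℕ} {Ω : Type} {mΩ : MeasurableSpace Ω} {μ : Measure Ω} [IsProbabilityMeasure μ]
  {ℱ : Filtration ℕ mΩ} {Mk : Fin n → Matrix (Fin k) (Fin k) ℂ}
  {ρ : ℕ → Ω → Matrix (Fin k) (Fin k) ℂ} {Y : ℕ → Ω → Fin n}

lemma quad_eq (hMk : ∑ i, (Mk i)ᴴ * Mk i = 1) {ρinf : Matrix (Fin k) (Fin k) ℂ}
    (hρinf : IsDensity ρinf) (hinv : (∑ i, Mk i * ρinf * (Mk i)ᴴ) = ρinf)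
    (LL : Fin n → Matrix (Fin k) (Fin k) ℂ) (l : Fin n → ℝ) :
    ∑ i, (alp (mrec Mk ρinf) l i ^ 2 * pr Mk i ρinf
      + 2 * alp (mrec Mk ρinf) l i * fB (Aob LL l) (Mk i * ρinf * (Mk i)ᴴ))
    = ∑ i, ∑ j, l i * Crec Mk ρinf LL i j * l j := by
  set m := mrec Mk ρinf with hm
  have hm1 : ∑ i, m i = 1 := pr_sum Mk hMk hρinf
  have hpm : ∀ i, pr Mk i ρinf = m i := fun i => rfl
  set F : Fin n → Fin n → ℝ := fun i j => fB (LL j) (Mk i * ρinf * (Mk i)ᴴ) with hF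
  set G : Fin n → ℝ := fun j => fB (LL j) ρinf with hG
  have hFG : ∀ j, ∑ i, F i j = G j := fun j => by
    rw [hF, hG]; simp only; rw [← fB_sum, hinv]
  have hC : ∀ i j, Crec Mk ρinf LL i j = (if i = j then m i else 0) - m i * m j + (F i j + F j i)
      - (m i * G j + m j * G i) := fun i j => rfl
  set c := ∑ j, l j * m j with hc
  have hal : ∀ i, alp m l i = l i - c := fun i => rfl
  have hR : ∑ i, ∑ j, l i * Crec Mk ρinf LL i j * l j
      = (∑ i, l i ^ 2 * m i) - c * c + 2 * (∑ i, ∑ j, l i * l j * F i j)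
        - 2 * (c * ∑ j, l j * G j) := by
    have s1 : ∑ i, ∑ j, l i * (if i = j then m i else 0) * l j = ∑ i, l i ^ 2 * m i := by
      refine sum_congr rfl fun i _ => ?_
      simp only [mul_ite, mul_zero, ite_mul, zero_mul, Finset.sum_ite_eq, mem_univ, if_true]
      ring
    have s2 : ∑ i, ∑ j, (l i * m i) * (l j * m j) = c * c := by rw [hc, sum_mul_sum]
    have s3 : ∑ i, ∑ j, l i * l j * F j i = ∑ i, ∑ j, l i * l j * F i j := by
      rw [sum_comm]
      exact sum_congr rfl fun i _ => sum_congr rfl fun j _ => by ring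
    have s4 : ∑ i, ∑ j, (l i * m i) * (l j * G j) = c * ∑ j, l j * G j := by rw [hc, sum_mul_sum]
    have s5 : ∑ i, ∑ j, (l i * G i) * (l j * m j) = c * ∑ j, l j * G j := by
      rw [← sum_mul_sum, mul_comm]
    calc ∑ i, ∑ j, l i * Crec Mk ρinf LL i j * l j
        = ∑ i, ∑ j, (l i * (if i = j then m i else 0) * l j - (l i * m i) * (l j * m j)
          + l i * l j * F i j + l i * l j * F j i - (l i * m i) * (l j * G j)
          - (l i * G i) * (l j * m j)) :=
          sum_congr rfl fun i _ => sum_congr rfl fun j _ => by rw [hC]; ring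
      _ = _ := by
          simp only [sum_sub_distrib, sum_add_distrib]
          rw [s1, s2, s3, s4, s5]
          ring
  rw [hR]
  have t1 : ∀ i, fB (Aob LL l) (Mk i * ρinf * (Mk i)ᴴ) = ∑ j, l j * F i j := fun i => fB_Aob _ _ _
  have t2 : ∑ i, ∑ j, l j * F i j = ∑ j, l j * G j := by
    rw [sum_comm]
    exact sum_congr rfl fun j _ => by rw [← mul_sum, hFG]
  have t3 : ∑ i, l i * (∑ j, l j * F i j) = ∑ i, ∑ j, l i * l j * F i j :=
    sum_congr rfl fun i _ => by rw [mul_sum]; exact sum_congr rfl fun j _ => by ring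
  calc ∑ i, (alp m l i ^ 2 * pr Mk i ρinf + 2 * alp m l i * fB (Aob LL l) (Mk i * ρinf * (Mk i)ᴴ))
      = ∑ i, (l i ^ 2 * m i - 2 * c * (l i * m i) + c ^ 2 * m i
          + 2 * (l i * (∑ j, l j * F i j)) - 2 * c * (∑ j, l j * F i j)) :=
        sum_congr rfl fun i _ => by rw [t1, hpm, hal]; ring
    _ = _ := by
        simp only [sum_sub_distrib, sum_add_distrib, ← mul_sum]
        rw [t2, t3, hm1, ← hc]
        ring

lemma S_eq {S : ℕ → Ω → Fin n → ℝ}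
    (hS : ∀ t ω i, S t ω i = (((Finset.Icc 1 t).filter (fun s => Y s ω = i)).card : ℝ))
    (t : ℕ) (ω : Ω) (i : Fin n) :
    S t ω i = ∑ s ∈ range t, if Y (s + 1) ω = i then (1:ℝ) else 0 := by
  rw [hS, Finset.card_filter]
  push_cast
  rw [Finset.range_eq_Ico, Finset.sum_Ico_add' (fun s => if Y s ω = i then (1:ℝ) else 0) 0 t 1]
  rfl

lemma S_lin {S : ℕ → Ω → Fin n → ℝ}
    (hS : ∀ t ω i, S t ω i = (((Finset.Icc 1 t).filter (fun s => Y s ω = i)).card : ℝ))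
    (m l : Fin n → ℝ) (t : ℕ) (ω : Ω) :
    ∑ i, l i * (S t ω i - t * m i) = ∑ s ∈ range t, alp m l (Y (s + 1) ω) := by
  have h1 : ∑ i, l i * S t ω i = ∑ s ∈ range t, l (Y (s + 1) ω) := by
    simp_rw [S_eq hS, mul_sum]
    rw [sum_comm]
    refine sum_congr rfl fun s _ => ?_
    simp
  have h2 : ∑ i, l i * (t * m i) = t * ∑ i, l i * m i := by
    rw [mul_sum]; exact sum_congr rfl fun i _ => by ring
  simp only [mul_sub, sum_sub_distrib, alp]
  rw [h1, h2]
  simp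

lemma lln (hMk : ∑ i, (Mk i)ᴴ * Mk i = 1) {ρinf : Matrix (Fin k) (Fin k) ℂ}
    (huniq : ∀ σ, IsDensity σ → (∑ i, Mk i * σ * (Mk i)ᴴ) = σ → σ = ρinf)
    (hQT : IsMeasTraj Mk μ ℱ ρ Y) {S : ℕ → Ω → Fin n → ℝ}
    (hS : ∀ t ω i, S t ω i = (((Finset.Icc 1 t).filter (fun s => Y s ω = i)).card : ℝ)) :
    ∀ᵐ ω ∂μ,
      Tendsto (fun t : ℕ => fun i => S t ω i / t) atTop (nhds (mrec Mk ρinf)) := by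
  have e1 : ∀ᵐ ω ∂μ, ∀ i : Fin n, Tendsto (fun t : ℕ =>
      (∑ s ∈ range t, MDw Mk ρ Y (fun j _ => if j = i then 1 else 0) s ω) / t) atTop (nhds 0) :=
    ae_all_iff.2 fun i => (hQT.md hMk _ (fun j => measurable_const) 1
      (fun j σ _ => by split_ifs <;> simp)).slln
  filter_upwards [e1, hQT.ergodic hMk ρinf huniq] with ω e1 he
  rw [tendsto_pi_nhds]
  intro i
  have h := (e1 i).add (he ((Mk i)ᴴ * Mk i))
  rw [← pr_eq_fB, zero_add] at h
  refine h.congr fun t => ?_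
  rw [S_eq hS, ← add_div, ← sum_add_distrib]
  congr 1
  refine sum_congr rfl fun s _ => ?_
  simp [MDw, ← pr_eq_fB]

lemma charlim (hMk : ∑ i, (Mk i)ᴴ * Mk i = 1) {ρinf : Matrix (Fin k) (Fin k) ℂ}
    (hρinf : IsDensity ρinf) (hinv : (∑ i, Mk i * ρinf * (Mk i)ᴴ) = ρinf)
    (huniq : ∀ σ, IsDensity σ → (∑ i, Mk i * σ * (Mk i)ᴴ) = σ → σ = ρinf)
    {LL : Fin n → Matrix (Fin k) (Fin k) ℂ}
    (hLL : ∀ i : Fin n, LL i - (∑ j, (Mk j)ᴴ * LL i * Mk j) =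
        (Mk i)ᴴ * Mk i - mrec Mk ρinf i • (1 : Matrix (Fin k) (Fin k) ℂ))
    (hQT : IsMeasTraj Mk μ ℱ ρ Y) {S : ℕ → Ω → Fin n → ℝ}
    (hS : ∀ t ω i, S t ω i = (((Finset.Icc 1 t).filter (fun s => Y s ω = i)).card : ℝ))
    (l : Fin n → ℝ) :
    0 ≤ ∑ i, ∑ j, l i * Crec Mk ρinf LL i j * l j ∧
    Tendsto (fun t : ℕ => ∫ ω, Complex.exp (Complex.I *
      ((∑ i, l i * ((S t ω i - t * mrec Mk ρinf i) / Real.sqrt t) : ℝ) : ℂ)) ∂μ) atTop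
      (nhds (Complex.exp (-(((∑ i, ∑ j, l i * Crec Mk ρinf LL i j * l j) / 2 : ℝ) : ℂ)))) := by
  have h0 : ∀ σ, IsDensity σ →
      ∑ i, pr Mk i σ * WW Mk (alp (mrec Mk ρinf) l) (Aob LL l) i σ = 0 :=
    fun σ h => comp0 hMk hLL l h
  have hq := qv hMk huniq hQT _ _ h0
  rw [quad_eq hMk hρinf hinv] at hq
  set A := Aob LL l with hA
  set a := alp (mrec Mk ρinf) l with ha
  have hmd := hQT.md hMk (WW Mk a A) (WW_meas a A) _ (fun i σ h => WW_bound a A i h)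
  refine ⟨?_, ?_⟩
  · obtain ⟨ω, hω⟩ := hq.exists
    exact ge_of_tendsto' hω fun t => div_nonneg (sum_nonneg fun s _ => sq_nonneg _) (by positivity)
  have hcl := hmd.clt _ hq
  refine tendsto_of_tendsto_of_dist hcl ?_
  have hD : ∀ᵐ ω ∂μ, ∀ t : ℕ, |(∑ s ∈ range t, MDw Mk ρ Y (WW Mk a A) s ω)
      - ∑ i, l i * (S t ω i - t * mrec Mk ρinf i)| ≤ 2 * bdA A := by
    filter_upwards [hQT.good] with ω hg t
    have : (∑ s ∈ range t, MDw Mk ρ Y (WW Mk a A) s ω)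
      - ∑ i, l i * (S t ω i - t * mrec Mk ρinf i) = fB A (ρ t ω) - fB A (ρ 0 ω) := by
      rw [S_lin hS, ← sum_sub_distrib, ← Finset.sum_range_sub (fun s => fB A (ρ s ω))]
      refine sum_congr rfl fun s _ => ?_
      unfold MDw
      rw [h0 _ (hg s).1, (hg s).2]
      unfold WW
      ring
    rw [this]
    have h1 : |fB A (ρ t ω)| ≤ bdA A := fB_bound A (hg t).1
    have h2 : |fB A (ρ 0 ω)| ≤ bdA A := fB_bound A (hg 0).1
    rw [abs_le] at *
    constructor <;> linarith
  have hSm : ∀ t i, Measurable (fun ω => S t ω i) := by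
    intro t i
    simp_rw [S_eq hS]
    exact Finset.measurable_fun_sum _ fun s _ => (hQT.ind_meas (s+1) i).mono (ℱ.le _) le_rfl
  refine squeeze_zero (fun _ => dist_nonneg) (g := fun t : ℕ => 2 * bdA A / Real.sqrt t) ?_ ?_
  · intro t
    rw [dist_eq_norm]
    have hint : ∀ g : Ω → ℝ, Measurable g →
        Integrable (fun ω => Complex.exp (Complex.I * (g ω : ℂ))) μ := by
      intro g hg
      refine Integrable.of_bound (C := 1) (by fun_prop) (ae_of_all _ fun ω => ?_)
      rw [mul_comm, Complex.norm_exp_ofReal_mul_I]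
    rw [← integral_sub]
    · refine (norm_integral_le_of_norm_le_const (C := 2 * bdA A / Real.sqrt t) ?_).trans (by simp)
      filter_upwards [hD] with ω hω
      set x : ℝ := (∑ s ∈ range t, MDw Mk ρ Y (WW Mk a A) s ω) / Real.sqrt t with hx
      set y : ℝ := ∑ i, l i * ((S t ω i - t * mrec Mk ρinf i) / Real.sqrt t) with hy
      have hy' : y = (∑ i, l i * (S t ω i - t * mrec Mk ρinf i)) / Real.sqrt t := by
        rw [hy, sum_div]
        exact sum_congr rfl fun i _ => by ring
      have hxy : |x - y| ≤ 2 * bdA A / Real.sqrt t := by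
        rw [hx, hy', ← sub_div, abs_div, abs_of_nonneg (Real.sqrt_nonneg _)]
        gcongr
        exact hω t
      have : Complex.exp (Complex.I * (x:ℂ)) - Complex.exp (Complex.I * (y:ℂ))
          = Complex.exp (Complex.I * (y:ℂ)) * (Complex.exp (Complex.I * ((x - y : ℝ):ℂ)) - 1) := by
        rw [mul_sub, ← Complex.exp_add]
        push_cast
        ring_nf
      rw [this, norm_mul, mul_comm Complex.I (y:ℂ), Complex.norm_exp_ofReal_mul_I, one_mul]
      exact (Real.norm_exp_I_mul_ofReal_sub_one_le).trans hxy
    · exact hint _ (((hmd.sum_meas t).mono (ℱ.le _) le_rfl).div_const _)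
    · exact hint _ (Finset.measurable_fun_sum _ fun i _ =>
        (((hSm t i).sub_const _).div_const _).const_mul _)
  · have : Tendsto (fun t : ℕ => Real.sqrt t) atTop atTop :=
      Real.tendsto_sqrt_atTop.comp tendsto_natCast_atTop_atTop
    exact this.const_div_atTop _

end Fin4

/-- (Central Limit Theorem for quantum measurement records.) If the
quantum channel `L(ρ) = Σ_i M_i ρ M_i^*` has a unique invariant state `ρ_∞`, the record
`S_t = Σ_{s≤t} X_s` of the successive measurement outcomes satisfies `S_t/t → m` a.s.
and `(S_t − t m)/√t` converges in distribution to `N(0, C)` on `ℝ^n` (characterized by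
its characteristic function), `C` being symmetric positive semidefinite. -/
theorem stmt14 {k n : ℕ} (hk : 1 ≤ k) (hn : 1 ≤ n)
    (Mk : Fin n → Matrix (Fin k) (Fin k) ℂ)
    (hMk : ∑ i, (Mk i)ᴴ * Mk i = 1)
    (ρinf : Matrix (Fin k) (Fin k) ℂ) (hρinf : IsDensity ρinf)
    (hinv : (∑ i, Mk i * ρinf * (Mk i)ᴴ) = ρinf)
    (huniq : ∀ σ, IsDensity σ → (∑ i, Mk i * σ * (Mk i)ᴴ) = σ → σ = ρinf)
    (LL : Fin n → Matrix (Fin k) (Fin k) ℂ)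
    (hLL : ∀ i : Fin n,
      LL i - (∑ j, (Mk j)ᴴ * LL i * Mk j) =
        (Mk i)ᴴ * Mk i - mrec Mk ρinf i • (1 : Matrix (Fin k) (Fin k) ℂ))
    {Ω : Type} {mΩ : MeasurableSpace Ω} (μ : Measure Ω) [IsProbabilityMeasure μ]
    (ℱ : Filtration ℕ mΩ)
    (ρ : ℕ → Ω → Matrix (Fin k) (Fin k) ℂ) (Y : ℕ → Ω → Fin n)
    (hQT : IsMeasTraj Mk μ ℱ ρ Y)
    (S : ℕ → Ω → Fin n → ℝ)
    (hS : ∀ t ω i, S t ω i = (((Finset.Icc 1 t).filter (fun s => Y s ω = i)).card : ℝ)) :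
    (∀ᵐ ω ∂μ,
      Tendsto (fun t : ℕ => fun i => S t ω i / t) atTop (nhds (mrec Mk ρinf))) ∧
    (∀ i j, Crec Mk ρinf LL i j = Crec Mk ρinf LL j i) ∧
    Matrix.PosSemidef (Matrix.of fun i j => Crec Mk ρinf LL i j) ∧
    ∃ ν : Measure (Fin n → ℝ), IsProbabilityMeasure ν ∧
      (∀ l : Fin n → ℝ,
        ∫ x, Complex.exp (Complex.I * ((∑ i, l i * x i : ℝ) : ℂ)) ∂ν =
          Complex.exp (-(((∑ i, ∑ j, l i * Crec Mk ρinf LL i j * l j) / 2 : ℝ) : ℂ))) ∧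
      ∀ f : BoundedContinuousFunction (Fin n → ℝ) ℝ,
        Tendsto
          (fun t : ℕ =>
            ∫ ω, f (fun i => (S t ω i - t * mrec Mk ρinf i) / Real.sqrt t) ∂μ)
          atTop (nhds (∫ x, f x ∂ν)) := by

  have hch := charlim (μ := μ) hMk hρinf hinv huniq hLL hQT hS
  have hsym : ∀ i j, Crec Mk ρinf LL i j = Crec Mk ρinf LL j i := by
    intro i j
    unfold Crec
    by_cases h : i = j
    · subst h; rfl
    · rw [if_neg h, if_neg (fun e => h e.symm)]; ring
  have hquad : ∀ l : Fin n → ℝ, l ⬝ᵥ (Matrix.of fun i j => Crec Mk ρinf LL i j) *ᵥ l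
      = ∑ i, ∑ j, l i * Crec Mk ρinf LL i j * l j := by
    intro l
    simp only [dotProduct, mulVec, Matrix.of_apply, mul_sum, mul_assoc]
  have hpsd : Matrix.PosSemidef (Matrix.of fun i j => Crec Mk ρinf LL i j) := by
    refine Matrix.PosSemidef.of_dotProduct_mulVec_nonneg ?_ fun l => ?_
    · ext i j
      simp [hsym j i]
    · rw [star_trivial, hquad]
      exact (hch l).1
  refine ⟨lln hMk huniq hQT hS, hsym, hpsd, ?_⟩
  set G : Measure (EuclideanSpace ℝ (Fin n)) :=
    ProbabilityTheory.multivariateGaussian 0 (Matrix.of fun i j => Crec Mk ρinf LL i j) with hG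
  have hof : Measurable (fun x : EuclideanSpace ℝ (Fin n) => (x.ofLp : Fin n → ℝ)) :=
    (PiLp.continuous_ofLp 2 _).measurable
  have hcG : ∀ l : Fin n → ℝ, charFun G (WithLp.toLp 2 l) =
      Complex.exp (-(((∑ i, ∑ j, l i * Crec Mk ρinf LL i j * l j) / 2 : ℝ) : ℂ)) := by
    intro l
    rw [hG, ProbabilityTheory.charFun_multivariateGaussian hpsd]
    congr 1
    rw [hquad]
    simp
  have hinner : ∀ (l : Fin n → ℝ) (x : EuclideanSpace ℝ (Fin n)),
      Complex.exp (((inner ℝ x (WithLp.toLp 2 l) : ℝ) : ℂ) * Complex.I)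
      = Complex.exp (Complex.I * ((∑ i, l i * x i : ℝ) : ℂ)) := by
    intro l x
    rw [mul_comm, PiLp.inner_apply]
    rfl
  refine ⟨G.map (fun x => x.ofLp), Measure.isProbabilityMeasure_map hof.aemeasurable, ?_, ?_⟩
  · intro l
    rw [integral_map hof.aemeasurable
      (Continuous.aestronglyMeasurable (by fun_prop)), ← hcG, charFun_apply]
    exact integral_congr_ae (ae_of_all _ fun x => (hinner l x).symm)
  have hSm : ∀ t i, Measurable (fun ω => S t ω i) := by
    intro t i
    simp_rw [S_eq hS]
    exact Finset.measurable_fun_sum _ fun s _ => (hQT.ind_meas (s+1) i).mono (ℱ.le _) le_rfl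
  set V : ℕ → Ω → EuclideanSpace ℝ (Fin n) := fun t ω =>
    WithLp.toLp 2 (fun i => (S t ω i - t * mrec Mk ρinf i) / Real.sqrt t) with hV
  have hVm : ∀ t, Measurable (V t) := by
    intro t
    refine (PiLp.continuous_toLp 2 _).measurable.comp ?_
    exact measurable_pi_lambda _ fun i => ((hSm t i).sub_const _).div_const _
  let PV : ℕ → ProbabilityMeasure (EuclideanSpace ℝ (Fin n)) := fun t =>
    ⟨μ.map (V t), Measure.isProbabilityMeasure_map (hVm t).aemeasurable⟩
  let PG : ProbabilityMeasure (EuclideanSpace ℝ (Fin n)) := ⟨G, by rw [hG]; infer_instance⟩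
  have hT : Tendsto PV atTop (nhds PG) := by
    rw [ProbabilityMeasure.tendsto_iff_tendsto_charFun]
    intro x
    obtain ⟨l, rfl⟩ : ∃ l : Fin n → ℝ, x = WithLp.toLp 2 l := ⟨x.ofLp, rfl⟩
    change Tendsto (fun t => charFun (μ.map (V t)) (WithLp.toLp 2 l)) atTop
      (nhds (charFun G (WithLp.toLp 2 l)))
    rw [hcG]
    refine (hch l).2.congr fun t => ?_
    rw [charFun_apply, integral_map (hVm t).aemeasurable (Continuous.aestronglyMeasurable (by fun_prop))]
    exact integral_congr_ae (ae_of_all _ fun ω => (hinner l (V t ω)).symm)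
  intro f
  rw [integral_map hof.aemeasurable f.continuous.aestronglyMeasurable]
  rw [ProbabilityMeasure.tendsto_iff_forall_integral_tendsto] at hT
  have := hT (f.compContinuous ⟨_, PiLp.continuous_ofLp 2 (fun _ : Fin n => ℝ)⟩)
  change Tendsto (fun t => ∫ x, f (x.ofLp) ∂(μ.map (V t))) atTop (nhds (∫ x, f (x.ofLp) ∂G)) at this
  refine this.congr fun t => ?_
  rw [integral_map (hVm t).aemeasurable (by
    exact (f.continuous.comp (PiLp.continuous_ofLp 2 _)).aestronglyMeasurable)]
end
end

section
/- Assume the block-diagonal hypothesis (H1'): ℂ^k = E_1 ⊕ … ⊕ E_N is an orthogonal direct sum and P_j A_i = A_i P_j for all i = 1,…,2d and j = 1,…,N, where P_j is the orthogonal projection onto E_j. Let (ρ_n, X_n)_{n≥0} be the quantum trajectory process of the open quantum random walk, with filtration F_n = σ((ρ_k, X_k); k ≤ n), and set p_n^{(j)} = Tr(P_j ρ_n). Then for each j, the process (p_n^{(j)})_{n≥0} is a real-valued martingale with respect to (F_n), taking values in [0,1]. -/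
open MeasureTheory Filter Matrix Finset
open scoped ComplexOrder

noncomputable section

lemma dir_inj_s15 (d : ℕ) {i j : Fin (2 * d)} (h : dir d i = dir d j) : i = j := by
  have hi := i.2
  have hj := j.2
  have hd : 0 < d := by omega
  ext
  by_cases h1 : (i : ℕ) < d
  · have := congrFun h ⟨i, h1⟩
    simp only [dir, h1, if_true] at this
    split_ifs at this <;> omega
  · have := congrFun h ⟨i - d, by omega⟩
    simp only [dir, h1, if_true, if_false] at this
    split_ifs at this <;> omega

lemma tr_nonneg {k : ℕ} {P B : Matrix (Fin k) (Fin k) ℂ} (hP : Pᴴ = P) (hi : P * P = P)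
    (hB : B.PosSemidef) : 0 ≤ ((P * B).trace).re := by
  have h := (hB.mul_mul_conjTranspose_same P).trace_nonneg
  rw [hP, Matrix.trace_mul_comm, ← Matrix.mul_assoc, hi] at h
  exact (Complex.le_def.1 h).1

lemma tr_le {k : ℕ} {P B : Matrix (Fin k) (Fin k) ℂ} (hP : Pᴴ = P) (hi : P * P = P)
    (hB : B.PosSemidef) : ((P * B).trace).re ≤ (B.trace).re := by
  have h := tr_nonneg (P := 1 - P) (B := B) (by simp [hP])
    (by simp [mul_sub, sub_mul, hi]) hB
  simp [sub_mul] at h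
  exact h

lemma tr_real {k : ℕ} {B : Matrix (Fin k) (Fin k) ℂ} (hB : B.PosSemidef) :
    B.trace = (B.trace.re : ℂ) := by
  have h := hB.trace_nonneg
  apply Complex.ext
  · simp
  · simpa using (Complex.le_def.1 h).2.symm

lemma g_eq {k : ℕ} {P B : Matrix (Fin k) (Fin k) ℂ} (hB : B.PosSemidef) :
    ((P * ((B.trace)⁻¹ • B)).trace).re = (B.trace.re)⁻¹ * ((P * B).trace).re := by
  rw [Matrix.mul_smul, Matrix.trace_smul, tr_real hB, ← Complex.ofReal_inv, smul_eq_mul,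
    Complex.re_ofReal_mul, Complex.ofReal_re]

lemma g_bound {k : ℕ} {P B : Matrix (Fin k) (Fin k) ℂ} (hP : Pᴴ = P) (hi : P * P = P)
    (hB : B.PosSemidef) : |(B.trace.re)⁻¹ * ((P * B).trace).re| ≤ 1 := by
  have h0 := tr_nonneg hP hi hB
  have h1 := tr_le hP hi hB
  rw [abs_of_nonneg (mul_nonneg (inv_nonneg.2 (h0.trans h1)) h0), inv_mul_eq_div]
  exact div_le_one_of_le₀ h1 (h0.trans h1)

lemma g_mul {k : ℕ} {P B : Matrix (Fin k) (Fin k) ℂ} (hP : Pᴴ = P) (hi : P * P = P)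
    (hB : B.PosSemidef) :
    (B.trace.re)⁻¹ * ((P * B).trace).re * B.trace.re = ((P * B).trace).re := by
  have h0 := tr_nonneg hP hi hB
  have h1 := tr_le hP hi hB
  by_cases h : B.trace.re = 0
  · rw [h]; rw [h] at h1; simp; linarith
  · field_simp

lemma sum_tr {k m : ℕ} (A : Fin m → Matrix (Fin k) (Fin k) ℂ)
    (hA : ∑ j, (A j)ᴴ * A j = 1) (P R : Matrix (Fin k) (Fin k) ℂ)
    (hc : ∀ i, P * A i = A i * P) :
    ∑ i, ((P * (A i * R * (A i)ᴴ)).trace).re = ((P * R).trace).re := by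
  have : ∀ i, (P * (A i * R * (A i)ᴴ)).trace = ((A i)ᴴ * A i * (P * R)).trace := by
    intro i
    rw [← Matrix.mul_assoc, ← Matrix.mul_assoc, hc, Matrix.trace_mul_comm]
    simp only [Matrix.mul_assoc]
  simp_rw [this]
  rw [← Complex.re_sum, ← Matrix.trace_sum, ← Finset.sum_mul, hA, one_mul]

lemma meas_tr {k : ℕ} {Ω : Type} {m : MeasurableSpace Ω} (C D E : Matrix (Fin k) (Fin k) ℂ)
    {R : Ω → Matrix (Fin k) (Fin k) ℂ} (hR : Measurable[m] R) :
    Measurable[m] fun ω => ((C * (D * R ω * E)).trace).re := by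
  have h : ∀ i j, Measurable[m] fun ω => R ω i j := fun i j =>
    (measurable_pi_apply j).comp ((measurable_pi_apply i).comp hR)
  simp only [Matrix.trace, Matrix.diag, Matrix.mul_apply]
  fun_prop

/-- Under the block-diagonal hypothesis (H1'), for each `j` the process
`p_n^{(j)} = Tr(P_j ρ_n)` is a real-valued martingale with values in `[0,1]`. -/
theorem stmt15 {k d N : ℕ} (hd : 1 ≤ d)
    (A : Fin (2 * d) → Matrix (Fin k) (Fin k) ℂ)
    (hA : ∑ j, (A j)ᴴ * A j = 1)
    (P : Fin N → Matrix (Fin k) (Fin k) ℂ)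
    (hsa : ∀ j, (P j)ᴴ = P j) (hidem : ∀ j, P j * P j = P j)
    (horth : ∀ j j', j ≠ j' → P j * P j' = 0)
    (hsum : ∑ j, P j = 1)
    (hcomm : ∀ (i : Fin (2 * d)) (j : Fin N), P j * A i = A i * P j)
    {Ω : Type} {mΩ : MeasurableSpace Ω} (μ : Measure Ω) [IsProbabilityMeasure μ]
    (ℱ : Filtration ℕ mΩ)
    (ρ : ℕ → Ω → Matrix (Fin k) (Fin k) ℂ) (X : ℕ → Ω → Fin d → ℤ)
    (hQT : IsQTraj A μ ℱ ρ X) :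
    ∀ j : Fin N,
      Martingale (fun n ω => ((P j * ρ n ω).trace).re) ℱ μ ∧
      ∀ n, ∀ᵐ ω ∂μ,
        0 ≤ ((P j * ρ n ω).trace).re ∧ ((P j * ρ n ω).trace).re ≤ 1 := by
  intro j
  have hbd : ∀ n, ∀ᵐ ω ∂μ,
        0 ≤ ((P j * ρ n ω).trace).re ∧ ((P j * ρ n ω).trace).re ≤ 1 := by
    intro n
    filter_upwards [hQT.density n] with ω hω
    refine ⟨tr_nonneg (hsa j) (hidem j) hω.1, ?_⟩
    have := tr_le (hsa j) (hidem j) hω.1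
    rwa [hω.2, Complex.one_re] at this
  refine ⟨?_, hbd⟩
  have hmeas : ∀ n, StronglyMeasurable[ℱ n] fun ω => ((P j * ρ n ω).trace).re := by
    intro n
    have := meas_tr (P j) 1 1 (hQT.adapted_ρ n)
    simp only [one_mul, mul_one] at this
    exact this.stronglyMeasurable
  have hint : ∀ n, Integrable (fun ω => ((P j * ρ n ω).trace).re) μ := by
    intro n
    refine Integrable.of_bound ((hmeas n).mono (ℱ.le n)).aestronglyMeasurable 1 ?_
    filter_upwards [hbd n] with ω hω
    rw [Real.norm_eq_abs, abs_of_nonneg hω.1]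
    exact hω.2
  refine martingale_nat hmeas hint ?_
  intro n
  set ind : Fin (2 * d) → Ω → ℝ :=
    fun i ω => if X (n + 1) ω = X n ω + dir d i then (1 : ℝ) else 0 with hind
  set t : Fin (2 * d) → Ω → ℝ := fun i ω => ((A i * ρ n ω * (A i)ᴴ).trace).re with ht
  set s : Fin (2 * d) → Ω → ℝ := fun i ω => ((P j * (A i * ρ n ω * (A i)ᴴ)).trace).re with hs
  have hXn1 : Measurable (X (n + 1)) := (hQT.adapted_X (n + 1)).mono (ℱ.le _) le_rfl
  have hXn : Measurable (X n) := (hQT.adapted_X n).mono (ℱ.le _) le_rfl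
  have hindm : ∀ i, Measurable (ind i) := by
    intro i
    exact Measurable.ite (measurableSet_eq_fun hXn1 (hXn.add_const _)) measurable_const
      measurable_const
  have hind01 : ∀ i ω, |ind i ω| ≤ 1 := by
    intro i ω
    simp only [hind]
    split_ifs <;> simp
  have hindi : ∀ i, Integrable (ind i) μ := fun i =>
    Integrable.of_bound (hindm i).aestronglyMeasurable 1 (ae_of_all _ (hind01 i))
  have htm : ∀ i, Measurable[ℱ n] (t i) := by
    intro i
    have := meas_tr 1 (A i) (A i)ᴴ (hQT.adapted_ρ n)
    simpa only [one_mul] using this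
  have hsm : ∀ i, Measurable[ℱ n] (s i) := fun i =>
    meas_tr (P j) (A i) (A i)ᴴ (hQT.adapted_ρ n)
  set g : Fin (2 * d) → Ω → ℝ := fun i ω => (t i ω)⁻¹ * s i ω with hg
  have hgm : ∀ i, StronglyMeasurable[ℱ n] (g i) := fun i =>
    ((htm i).inv.mul (hsm i)).stronglyMeasurable
  have hpos : ∀ᵐ ω ∂μ, ∀ i, (A i * ρ n ω * (A i)ᴴ).PosSemidef := by
    filter_upwards [hQT.density n] with ω hω i
    exact hω.1.mul_mul_conjTranspose_same (A i)
  have hgi : ∀ i, Integrable (g i * ind i) μ := by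
    intro i
    refine Integrable.of_bound
      (((hgm i).mono (ℱ.le n)).aestronglyMeasurable.mul (hindm i).aestronglyMeasurable) 1 ?_
    filter_upwards [hpos] with ω hω
    rw [Pi.mul_apply, Real.norm_eq_abs, abs_mul]
    exact mul_le_one₀ (g_bound (hsa j) (hidem j) (hω i)) (abs_nonneg _) (hind01 i ω)
  -- the walk a.s. makes one of the allowed steps
  have hS1 : ∀ ω, ∑ i, ind i ω ≤ 1 := by
    intro ω
    by_cases h : ∃ i, X (n + 1) ω = X n ω + dir d i
    · obtain ⟨i, hi⟩ := h
      rw [Finset.sum_eq_single i]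
      · exact (abs_le.1 (hind01 i ω)).2
      · intro b _ hb
        simp only [hind]
        rw [if_neg]
        intro h
        exact hb (dir_inj_s15 d (add_left_cancel (h.symm.trans hi)))
      · simp
    · push Not at h
      rw [Finset.sum_eq_zero]
      · exact zero_le_one
      · intro i _
        simp [hind, h i]
  have hint1 : ∫ ω, (1 - ∑ i, ind i ω) ∂μ = 0 := by
    rw [integral_sub (integrable_const _) (integrable_finset_sum _ fun i _ => hindi i),
      integral_finset_sum _ fun i _ => hindi i]
    have h1 : ∀ i, ∫ ω, ind i ω ∂μ = ∫ ω, t i ω ∂μ := by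
      intro i
      rw [← integral_condExp (ℱ.le n)]
      exact integral_congr_ae (hQT.prob n i)
    have hti : ∀ i, Integrable (t i) μ := fun i =>
      (integrable_condExp (m := ℱ n) (f := ind i)).congr (hQT.prob n i)
    simp_rw [h1]
    rw [← integral_finset_sum _ fun i _ => hti i]
    have : (fun ω => ∑ i, t i ω) =ᵐ[μ] fun _ => (1 : ℝ) := by
      filter_upwards [hQT.density n] with ω hω
      have := sum_tr A hA 1 (ρ n ω) (by simp)
      simp only [one_mul, hω.2, Complex.one_re] at this
      exact this
    rw [integral_congr_ae this]
    simp
  have hSone : ∀ᵐ ω ∂μ, ∑ i, ind i ω = 1 := by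
    rw [integral_eq_zero_iff_of_nonneg (fun ω => sub_nonneg.2 (hS1 ω))
      ((integrable_const _).sub (integrable_finset_sum _ fun i _ => hindi i))] at hint1
    filter_upwards [hint1] with ω hω
    simp only [Pi.zero_apply] at hω
    linarith
  have hdec : (fun ω => ((P j * ρ (n + 1) ω).trace).re) =ᵐ[μ] ∑ i, g i * ind i := by
    filter_upwards [hSone, hpos, ae_all_iff.2 (hQT.update n)] with ω h1 h2 h3
    rw [Finset.sum_apply, ← mul_one ((P j * ρ (n + 1) ω).trace).re, ← h1, Finset.mul_sum]
    refine Finset.sum_congr rfl fun i _ => ?_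
    rw [Pi.mul_apply]
    by_cases h : X (n + 1) ω = X n ω + dir d i
    · rw [h3 i h, g_eq (h2 i)]
    · simp [hind, h]
  have hce : ∀ i, μ[g i * ind i | ℱ n] =ᵐ[μ] s i := by
    intro i
    refine (condExp_mul_of_stronglyMeasurable_left (hgm i) (hgi i) (hindi i)).trans ?_
    filter_upwards [hQT.prob n i, hpos] with ω h1 h2
    rw [Pi.mul_apply]
    refine (congrArg (g i ω * ·) h1).trans ?_
    exact g_mul (hsa j) (hidem j) (h2 i)
  symm
  refine (condExp_congr_ae hdec).trans ?_
  refine (condExp_finset_sum (fun i _ => hgi i) (ℱ n)).trans ?_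
  filter_upwards [ae_all_iff.2 hce] with ω hω
  rw [Finset.sum_apply, Finset.sum_congr rfl fun i _ => hω i]
  exact sum_tr A hA (P j) (ρ n ω) fun i => hcomm i j
end
end
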